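/- arXiv:1210.0217 — 7 statements merged into one kernel-verified Lean document; each statement's English description precedes it below -/
import Mathlib

section
/- Fix an integer d ≥ 2 and a nonzero vector k ∈ ℝ^d, and write k² = Σ_m k_m² (repeated Latin indices are summed from 1 to d). Let φ_{ij} : (0,∞) → ℂ (i,j ∈ {1,…,d}) be twice differentiable functions with φ_{ij} = φ_{ji}, and set φ₀(z) := Σ_i φ_{ii}(z). Let A_i, B_i, C ∈ ℂ be constants and set φ_i(z) := A_i/z + B_i/z³. Assume for all z > 0: (i) φ₀(z) = C/z²; (ii) i·k_m φ_{mi}(z) = φ_i'(z) + 3φ_i(z)/z + i·k_i φ₀(z); (iii) k_m k_n φ_{mn}(z) = k² φ₀(z); (iv) φ_{ij}''(z) + ((5−d)/z)φ_{ij}'(z) + ((4−2d)/z²)φ_{ij}(z) − k²φ_{ij}(z) = −k_j k_m φ_{im}(z) − k_i k_m φ_{mj}(z) + k_i k_j φ₀(z). Define the traceless-transverse part φ̄_{ij}(z) := φ_{ij}(z) − (k_i k_m φ_{mj}(z) + k_j k_m φ_{mi}(z))/k² + k_i k_j k_m k_n φ_{mn}(z)/k⁴ − (1/(d−1))(δ_{ij}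 − k_i k_j/k²)(φ₀(z) − k_m k_n φ_{mn}(z)/k²). Then for all i,j and all z > 0: φ̄_{ij}''(z) + ((5−d)/z)φ̄_{ij}'(z) + ((4−2d)/z²)φ̄_{ij}(z) − k²φ̄_{ij}(z) = 0. -/
/-!
Since `φ_i = A_i/z + B_i/z³`, the divergence constraint `h2` gives `k_m φ_{mi} = V_i/z²` with
`V_i = k_i C - 2i A_i`: the `B_i` terms cancel. The trace part of `φ̄` vanishes by `h3`, so on `z > 0`
the projected field is `φ̄_{ij} = φ_{ij} + W_{ij}/z²` with
`k² W_{ij} = k_i k_j C - k_i V_j - k_j V_i`. The exponent `-2` is a root of the indicial polynomial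
`s(s-1) + (5-d)s + (4-2d)`, so the operator maps `W/z²` to `-k² W/z²`, which
is exactly minus the source term of `φ_{ij}` in `h4`.
-/

lemma hasDerivAt_const_div_pow (W : ℂ) (n : ℕ) {z : ℝ} (hz : 0 < z) :
    HasDerivAt (fun x : ℝ => W / (x : ℂ) ^ n) (-(n : ℂ) * W / (z : ℂ) ^ (n + 1)) z := by
  have hzc : (z : ℂ) ≠ 0 := by exact_mod_cast hz.ne'
  have h := ((hasDerivAt_const (z : ℂ) W).div (hasDerivAt_pow n (z : ℂ))
    (pow_ne_zero n hzc)).comp_ofReal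
  refine h.congr_deriv ?_
  cases n with
  | zero => simp
  | succ m =>
    simp only [Nat.add_sub_cancel]
    field_simp
    ring


/- STATEMENT 0: Lemma 1 of the paper. The traceless-transverse part of the
symmetric component of the massless hook field satisfies the homogeneous
Bessel-type equation. -/
theorem stmt_0 (d : ℕ) (hd : 2 ≤ d) (k : Fin d → ℝ) (hk : k ≠ 0)
    (ksq : ℝ) (hksq : ksq = ∑ m, (k m) ^ 2)
    (φ : Fin d → Fin d → ℝ → ℂ)
    (hsym : ∀ i j, φ i j = φ j i)
    (hdiff1 : ∀ i j, ∀ z > (0 : ℝ), DifferentiableAt ℝ (φ i j) z)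
    (hdiff2 : ∀ i j, ∀ z > (0 : ℝ), DifferentiableAt ℝ (deriv (φ i j)) z)
    (A B : Fin d → ℂ) (C : ℂ)
    (φ0 : ℝ → ℂ) (hφ0 : ∀ z, φ0 z = ∑ i, φ i i z)
    (φv : Fin d → ℝ → ℂ)
    (hφv : ∀ i, ∀ z : ℝ, φv i z = A i / (z : ℂ) + B i / (z : ℂ) ^ 3)
    (h1 : ∀ z > (0 : ℝ), φ0 z = C / (z : ℂ) ^ 2)
    (h2 : ∀ i, ∀ z > (0 : ℝ),
      Complex.I * ∑ m, (k m : ℂ) * φ m i z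
        = deriv (φv i) z + 3 * φv i z / (z : ℂ) + Complex.I * (k i : ℂ) * φ0 z)
    (h3 : ∀ z > (0 : ℝ),
      (∑ m, ∑ n, (k m : ℂ) * (k n : ℂ) * φ m n z) = (ksq : ℂ) * φ0 z)
    (h4 : ∀ i j, ∀ z > (0 : ℝ),
      deriv (deriv (φ i j)) z + ((5 - (d : ℂ)) / (z : ℂ)) * deriv (φ i j) z
        + ((4 - 2 * (d : ℂ)) / (z : ℂ) ^ 2) * φ i j z - (ksq : ℂ) * φ i j z
      = - (k j : ℂ) * (∑ m, (k m : ℂ) * φ i m z)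
        - (k i : ℂ) * (∑ m, (k m : ℂ) * φ m j z)
        + (k i : ℂ) * (k j : ℂ) * φ0 z)
    (φbar : Fin d → Fin d → ℝ → ℂ)
    (hφbar : ∀ i j, ∀ z : ℝ, φbar i j z =
      φ i j z
      - ((k i : ℂ) * (∑ m, (k m : ℂ) * φ m j z)
         + (k j : ℂ) * (∑ m, (k m : ℂ) * φ m i z)) / (ksq : ℂ)
      + (k i : ℂ) * (k j : ℂ) * (∑ m, ∑ n, (k m : ℂ) * (k n : ℂ) * φ m n z)
          / (ksq : ℂ) ^ 2
      - (1 / ((d : ℂ) - 1))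
        * ((if i = j then (1 : ℂ) else 0) - (k i : ℂ) * (k j : ℂ) / (ksq : ℂ))
        * (φ0 z - (∑ m, ∑ n, (k m : ℂ) * (k n : ℂ) * φ m n z) / (ksq : ℂ))) :
    ∀ i j, ∀ z > (0 : ℝ),
      deriv (deriv (φbar i j)) z + ((5 - (d : ℂ)) / (z : ℂ)) * deriv (φbar i j) z
        + ((4 - 2 * (d : ℂ)) / (z : ℂ) ^ 2) * φbar i j z
        - (ksq : ℂ) * φbar i j z = 0 := by
  have hksq0 : (ksq : ℂ) ≠ 0 := by
    obtain ⟨m, hm⟩ := Function.ne_iff.mp hk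
    have hpos : 0 < ksq := by
      rw [hksq]
      exact Finset.sum_pos' (fun i _ => sq_nonneg _) ⟨m, Finset.mem_univ _, by have : k m ≠ 0 := hm; positivity⟩
    exact_mod_cast hpos.ne'
  have hV : ∀ i, ∀ z > (0 : ℝ), ∑ m, (k m : ℂ) * φ m i z
      = ((k i : ℂ) * C - 2 * Complex.I * A i) / (z : ℂ) ^ 2 := by
    intro i z hz
    have hzc : (z : ℂ) ≠ 0 := by exact_mod_cast hz.ne'
    have hd1 : deriv (φv i) z = -A i / (z : ℂ) ^ 2 - 3 * B i / (z : ℂ) ^ 4 := by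
      have hf : φv i = fun x : ℝ => A i / (x : ℂ) ^ 1 + B i / (x : ℂ) ^ 3 := by
        funext x
        rw [hφv, pow_one]
      rw [hf]
      refine (((hasDerivAt_const_div_pow (A i) 1 hz).add
        (hasDerivAt_const_div_pow (B i) 3 hz)).congr_deriv ?_).deriv
      push_cast
      ring
    have h := h2 i z hz
    rw [hd1, hφv, h1 z hz] at h
    apply mul_left_cancel₀ Complex.I_ne_zero
    rw [h]
    field_simp
    linear_combination (2 * A i * (z : ℂ) ^ 2) * Complex.I_sq
  intro i j
  set V : Fin d → ℂ := fun i => (k i : ℂ) * C - 2 * Complex.I * A i with hVdef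
  obtain ⟨W, hW⟩ : ∃ W : ℂ, (ksq : ℂ) * W
      = (k i : ℂ) * (k j : ℂ) * C - (k i : ℂ) * V j - (k j : ℂ) * V i :=
    ⟨_, mul_div_cancel₀ _ hksq0⟩
  have hbar : ∀ z > (0 : ℝ), φbar i j z = φ i j z + W / (z : ℂ) ^ 2 := by
    intro z hz
    have hzc : (z : ℂ) ≠ 0 := by exact_mod_cast hz.ne'
    rw [hφbar, h3 z hz, hV i z hz, hV j z hz, mul_div_cancel_left₀ _ hksq0, sub_self, mul_zero,
      h1 z hz]
    field_simp
    linear_combination -hW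
  have hbar1 : ∀ z > (0 : ℝ), deriv (φbar i j) z
      = deriv (φ i j) z + (-2 * W) / (z : ℂ) ^ 3 := by
    intro z hz
    have he : φbar i j =ᶠ[nhds z] fun x => φ i j x + W / (x : ℂ) ^ 2 := by
      filter_upwards [lt_mem_nhds hz] with x hx using hbar x hx
    rw [he.deriv_eq]
    exact ((hdiff1 i j z hz).hasDerivAt.add (hasDerivAt_const_div_pow W 2 hz)).deriv
  have hbar2 : ∀ z > (0 : ℝ), deriv (deriv (φbar i j)) z
      = deriv (deriv (φ i j)) z + 6 * W / (z : ℂ) ^ 4 := by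
    intro z hz
    have he : deriv (φbar i j) =ᶠ[nhds z]
        fun x => deriv (φ i j) x + (-2 * W) / (x : ℂ) ^ 3 := by
      filter_upwards [lt_mem_nhds hz] with x hx using hbar1 x hx
    rw [he.deriv_eq]
    refine (((hdiff2 i j z hz).hasDerivAt.add
      (hasDerivAt_const_div_pow (-2 * W) 3 hz)).congr_deriv ?_).deriv
    push_cast
    ring
  intro z hz
  have hzc : (z : ℂ) ≠ 0 := by exact_mod_cast hz.ne'
  have h := h4 i j z hz
  have hs : ∑ m, (k m : ℂ) * φ i m z = V i / (z : ℂ) ^ 2 := by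
    simp_rw [hsym i]
    exact hV i z hz
  rw [hs, hV j z hz, h1 z hz] at h
  rw [hbar2 z hz, hbar1 z hz, hbar z hz]
  -- the `z⁻⁴` terms cancel because `6 - 2(5 - d) + (4 - 2d) = 0`
  have hE : 6 * W / (z : ℂ) ^ 4 + (5 - (d : ℂ)) / z * (-2 * W / (z : ℂ) ^ 3)
      + (4 - 2 * (d : ℂ)) / (z : ℂ) ^ 2 * (W / (z : ℂ) ^ 2) = 0 := by
    field_simp
    ring
  linear_combination h + hE - hW / (z : ℂ) ^ 2
end

section
/- Fix an integer d ≥ 3 and a nonzero vector k ∈ ℝ^d, write k² = Σ_m k_m² (repeated Latin indices summed from 1 to d, δ is the Kronecker delta). Let φ_{ij,l} : (0,∞) → ℂ be twice differentiable with φ_{ij,l} = φ_{ji,l} and φ_{ij,l} + φ_{il,j} + φ_{lj,i} = 0; let φ_{ij} : (0,∞) → ℂ be differentiable with φ_{ij} = φ_{ji}; let A_i, B_i, C ∈ ℂ and a_{ij} = −a_{ji} ∈ ℂ be constants, and set φ_l(z) := A_l/z + B_l/z³ and φ₀(z) := C/z². Assume for all z > 0: (h1) Σ_i φ_{ii,l}(z)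 = φ_l(z), Σ_i φ_{ii}(z) = φ₀(z), k_m A_m = 0, and i·k_m B_m = (d−1)C; (h2) i·k_m φ_{mi}(z) = φ_i'(z) + 3φ_i(z)/z + i·k_i φ₀(z); (h3) k_m k_n φ_{mn}(z) = k² φ₀(z); (h4) i·k_m φ_{ij,m}(z) = −φ_{ij}'(z) − (i/2)(k_i φ_j(z) + k_j φ_i(z)) + δ_{ij} φ₀(z)/z + ((d−4)/z)φ_{ij}(z); (h5) k_m φ_{mi,j}(z) = a_{ij}/(2z³) + (3/4)(k_i φ_j(z) − k_j φ_i(z)) + (i/2)φ_{ij}'(z) − (1/4)(k_i φ_j(z) + k_j φ_i(z)) − (i/(2z))δ_{ij}φ₀(z) − (i(d−4)/(2z))φ_{ij}(z); (h6) k_m k_n φ_{mn,i}(z) = k² φ_i(z) + k_i k_m φ_m(z) + (2i/z)k_i φ₀(z) + (2i(d−2)/z) k_m φ_{mi}(z); (h7) the field equation: φ_{ij,l}''(z) + ((7−d)/z)φ_{ij,l}'(z) − k²φ_{ij,l}(z) + k_i k_m φ_{mj,l}(z) + k_j k_m φ_{mi,l}(z) + (i/2)(k_i φ_{jl}'(z)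 + k_j φ_{il}'(z)) − k_i k_j φ_l(z) + (i(6−d)/(2z))(k_i φ_{jl}(z) + k_j φ_{il}(z)) − (2i/z)k_l φ_{ij}(z) − (i/z)δ_{ij} k_m φ_{ml}(z) + (i/z)δ_{il} k_m φ_{mj}(z) + (i/z)δ_{lj} k_m φ_{mi}(z) − (i/z)δ_{jl} k_i φ₀(z) − (i/z)δ_{il} k_j φ₀(z) − (1/z)δ_{ij} φ_l'(z) + ((9−3d)/z²)φ_{ij,l}(z) − (3/z²)δ_{ij}φ_l(z) = 0. Define φ̄_{ij,l}(z) := φ_{ij,l}(z) − (1/k²)(k_i k_m φ_{mj,l}(z) + k_j k_m φ_{im,l}(z) + k_l k_m φ_{ij,m}(z)) + (1/k⁴)(k_i k_j k_m k_n φ_{mn,l}(z) − (1/2)k_i k_l k_m k_n φ_{mn,j}(z) − (1/2)k_j k_l k_m k_n φ_{mn,i}(z)) − (1/(d−2))(δ_{ij} − k_i k_j/k²)(φ_l(z) − k_m k_n φ_{mn,l}(z)/k² − k_l k_m φ_m(z)/k²) + (1/(2(d−2)))(δ_{il} − k_i k_l/k²)(φ_j(z) − k_m k_n φ_{mn,j}(z)/k²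 − k_j k_m φ_m(z)/k²) + (1/(2(d−2)))(δ_{jl} − k_j k_l/k²)(φ_i(z) − k_m k_n φ_{mn,i}(z)/k² − k_i k_m φ_m(z)/k²). Then for all i,j,l and all z > 0: φ̄_{ij,l}''(z) + ((7−d)/z)φ̄_{ij,l}'(z) − k²φ̄_{ij,l}(z) + ((9−3d)/z²)φ̄_{ij,l}(z) = 0. -/
/-!
Write `E f = f'' + ((7-d)/z) f' - k² f + ((9-3d)/z²) f`. By the trace condition, the components of
`φbar` are constant-coefficient linear functionals of the components of `φ`, namely those of the
projection `ttPart` of a hook tensor onto its transverse traceless part; hence `E φbar` is `ttPart`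
applied to the tensor `E φ` (`bessel_comp`). The field equation says that `E φ` is a sum of terms
carrying an explicit factor `k_i`, `k_j`, `k_l` or a Kronecker delta. Moreover `E φ` inherits the
hook symmetries of `φ`, so such a sum may be replaced by its image under the Young projector, which
is pure gauge and trace:
`k_i Z_{jl} + k_j Z_{il} - k_l (Z_{ij} + Z_{ji}) + 2 δ_{ij} u_l - δ_{il} u_j - δ_{jl} u_i`.
The projection annihilates every tensor of this shape (`ttPart_gauge`), which gives the claim.
-/

/-- The Kronecker delta with complex values. -/
noncomputable def kron {d : ℕ} (i j : Fin d) : ℂ := if i = j then 1 else 0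

theorem kron_comm {d : ℕ} (i j : Fin d) : kron i j = kron j i := by
  unfold kron; simp only [eq_comm]

theorem sum_mul_kron {d : ℕ} (f : Fin d → ℂ) (j : Fin d) : ∑ m, f m * kron m j = f j := by
  simp [kron]

/-- The `(i, j, l)` component of the transverse traceless part of a hook tensor `T` with respect to
the momentum `k`, where `κ` stands for `k²`. The formula is the orthogonal projection only on
tensors with the hook symmetries; as a linear functional it is defined on all tensors. -/
noncomputable def ttFun {d : ℕ} (k : Fin d → ℂ) (κ : ℂ) (i j l : Fin d)
    (T : Fin d → Fin d → Fin d → ℂ) : ℂ :=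
  T i j l
      - (1 / κ) * (k i * (∑ m, k m * T m j l)
          + k j * (∑ m, k m * T i m l)
          + k l * (∑ m, k m * T i j m))
      + (1 / κ ^ 2)
        * (k i * k j * (∑ m, ∑ n, k m * k n * T m n l)
          - (1 / 2) * k i * k l * (∑ m, ∑ n, k m * k n * T m n j)
          - (1 / 2) * k j * k l * (∑ m, ∑ n, k m * k n * T m n i))
      - (1 / ((d : ℂ) - 2))
        * (kron i j - k i * k j / κ)
        * ((∑ p, T p p l) - (∑ m, ∑ n, k m * k n * T m n l) / κ
            - k l * (∑ m, k m * ∑ p, T p p m) / κ)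
      + (1 / (2 * ((d : ℂ) - 2)))
        * (kron i l - k i * k l / κ)
        * ((∑ p, T p p j) - (∑ m, ∑ n, k m * k n * T m n j) / κ
            - k j * (∑ m, k m * ∑ p, T p p m) / κ)
      + (1 / (2 * ((d : ℂ) - 2)))
        * (kron j l - k j * k l / κ)
        * ((∑ p, T p p i) - (∑ m, ∑ n, k m * k n * T m n i) / κ
            - k i * (∑ m, k m * ∑ p, T p p m) / κ)

/-- `ttFun` as a linear functional of the tensor. -/
noncomputable def ttPart {d : ℕ} (k : Fin d → ℂ) (κ : ℂ) (i j l : Fin d) :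
    (Fin d → Fin d → Fin d → ℂ) →ₗ[ℂ] ℂ where
  toFun := ttFun k κ i j l
  map_add' S T := by
    simp only [ttFun, Pi.add_apply, mul_add, Finset.sum_add_distrib]
    ring
  map_smul' c T := by
    have h1 : ∀ f : Fin d → ℂ, ∑ m, k m * (c * f m) = c * ∑ m, k m * f m := fun f => by
      rw [Finset.mul_sum]; exact Finset.sum_congr rfl fun m _ => by ring
    have h2 : ∀ f : Fin d → Fin d → ℂ,
        ∑ m, ∑ n, k m * k n * (c * f m n) = c * ∑ m, ∑ n, k m * k n * f m n := fun f => by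
      simp only [Finset.mul_sum]
      exact Finset.sum_congr rfl fun m _ => Finset.sum_congr rfl fun n _ => by ring
    simp only [ttFun, Pi.smul_apply, smul_eq_mul, RingHom.id_apply, ← Finset.mul_sum, h1,
      h2 (fun m n => T m n _)]
    ring

/-- The transverse traceless part of a hook-symmetrised tensor built from `k ⊗ Z` and `δ ⊗ u`
vanishes. -/
theorem ttPart_gauge {d : ℕ} (hd : (d : ℂ) - 2 ≠ 0) (k : Fin d → ℂ) (κ : ℂ)
    (hκ : κ = ∑ m, k m * k m) (hκ0 : κ ≠ 0)
    (Z : Fin d → Fin d → ℂ) (u : Fin d → ℂ) (T : Fin d → Fin d → Fin d → ℂ)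
    (hT : ∀ i j l, T i j l = k i * Z j l + k j * Z i l - k l * (Z i j + Z j i)
      + 2 * kron i j * u l - kron i l * u j - kron j l * u i) (i j l : Fin d) :
    ttPart k κ i j l T = 0 := by
  obtain ⟨Z1, hZ1⟩ : ∃ f : Fin d → ℂ, ∀ l, f l = ∑ m, k m * Z m l := ⟨_, fun _ => rfl⟩
  obtain ⟨Z2, hZ2⟩ : ∃ f : Fin d → ℂ, ∀ l, f l = ∑ m, k m * Z l m := ⟨_, fun _ => rfl⟩
  obtain ⟨Zk, hZk⟩ : ∃ c : ℂ, c = ∑ m, k m * Z1 m := ⟨_, rfl⟩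
  obtain ⟨Zt, hZt⟩ : ∃ c : ℂ, c = ∑ m, Z m m := ⟨_, rfl⟩
  obtain ⟨uk, huk⟩ : ∃ c : ℂ, c = ∑ m, k m * u m := ⟨_, rfl⟩
  have hZk2 : ∑ m, k m * Z2 m = Zk := by
    simp only [hZk, hZ1, hZ2, Finset.mul_sum]
    rw [Finset.sum_comm]
    exact Finset.sum_congr rfl fun m _ => Finset.sum_congr rfl fun n _ => by ring
  have hsymm : ∀ i j l, T i j l = T j i l := fun i j l => by
    rw [hT, hT, kron_comm j i]; ring
  -- divergence in the first index
  have c1 : ∀ j l, ∑ m, k m * T m j l = κ * Z j l + k j * Z1 l - k l * (Z1 j + Z2 j)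
      + 2 * k j * u l - k l * u j - kron j l * uk := fun j l => by
    rw [hZ1, hZ1, hZ2, huk, hκ]
    have hj := sum_mul_kron k j
    have hl := sum_mul_kron k l
    have : ∑ m, k m * T m j l
      = (∑ m, k m * k m) * Z j l + k j * (∑ m, k m * Z m l)
        - k l * (∑ m, k m * Z m j + ∑ m, k m * Z j m)
        + 2 * (∑ m, k m * kron m j) * u l - (∑ m, k m * kron m l) * u j
        - kron j l * ∑ m, k m * u m := by
      simp only [Finset.mul_sum, Finset.sum_mul, ← Finset.sum_add_distrib,
        ← Finset.sum_sub_distrib]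
      exact Finset.sum_congr rfl fun m _ => by rw [hT]; ring
    rw [this, hj, hl]
  -- divergence in the last index
  have c3 : ∀ i j, ∑ m, k m * T i j m = k i * Z2 j + k j * Z2 i - κ * (Z i j + Z j i)
      + 2 * kron i j * uk - k i * u j - k j * u i := fun i j => by
    rw [hZ2, hZ2, huk, hκ]
    have hi := sum_mul_kron k i
    have hj := sum_mul_kron k j
    have : ∑ m, k m * T i j m
      = k i * (∑ m, k m * Z j m) + k j * (∑ m, k m * Z i m) - (∑ m, k m * k m) * (Z i j + Z j i)
        + 2 * kron i j * (∑ m, k m * u m) - (∑ m, k m * kron m i) * u j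
        - (∑ m, k m * kron m j) * u i := by
      simp only [Finset.mul_sum, Finset.sum_mul, ← Finset.sum_add_distrib,
        ← Finset.sum_sub_distrib]
      exact Finset.sum_congr rfl fun m _ => by rw [hT, kron_comm i m, kron_comm j m]; ring
    rw [this, hi, hj]
  have c2 : ∀ i l, ∑ m, k m * T i m l = κ * Z i l + k i * Z1 l - k l * (Z1 i + Z2 i)
      + 2 * k i * u l - k l * u i - kron i l * uk := fun i l => by
    rw [← c1]; exact Finset.sum_congr rfl fun m _ => by rw [hsymm]
  -- double divergence in the symmetric pair
  have cc : ∀ l, ∑ m, ∑ n, k m * k n * T m n l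
      = 2 * κ * Z1 l - 2 * k l * Zk + 2 * κ * u l - 2 * k l * uk := fun l => by
    have h : ∀ m, ∑ n, k m * k n * T m n l = k m * (κ * Z m l + k m * Z1 l
        - k l * (Z1 m + Z2 m) + 2 * k m * u l - k l * u m - kron m l * uk) := fun m => by
      rw [← c2, Finset.mul_sum]
      exact Finset.sum_congr rfl fun n _ => by ring
    have hl := sum_mul_kron k l
    have : ∑ m, ∑ n, k m * k n * T m n l
      = κ * (∑ m, k m * Z m l) + (∑ m, k m * k m) * Z1 l
        - k l * (∑ m, k m * Z1 m + ∑ m, k m * Z2 m) + 2 * (∑ m, k m * k m) * u l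
        - k l * (∑ m, k m * u m) - (∑ m, k m * kron m l) * uk := by
      simp only [h]
      simp only [Finset.mul_sum, Finset.sum_mul, ← Finset.sum_add_distrib,
        ← Finset.sum_sub_distrib]
      exact Finset.sum_congr rfl fun m _ => by ring
    rw [this, ← hZ1, ← hκ, ← hZk, hZk2, ← huk, hl]; ring
  have ct : ∀ l, ∑ p, T p p l = 2 * Z1 l - 2 * k l * Zt + 2 * (d : ℂ) * u l - 2 * u l :=
      fun l => by
    have hl := sum_mul_kron u l
    have : ∑ p, T p p l = 2 * (∑ p, k p * Z p l) - 2 * k l * (∑ p, Z p p)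
        + 2 * (∑ _p : Fin d, 1) * u l - 2 * ∑ p, u p * kron p l := by
      simp only [Finset.mul_sum, Finset.sum_mul, ← Finset.sum_add_distrib,
        ← Finset.sum_sub_distrib]
      exact Finset.sum_congr rfl fun p _ => by
        rw [hT, show kron p p = 1 from if_pos rfl]; ring
    rw [this, ← hZ1, ← hZt, hl]; simp
  have ckt : ∑ m, k m * ∑ p, T p p m = 2 * Zk - 2 * κ * Zt + 2 * (d : ℂ) * uk - 2 * uk := by
    rw [hZk, hκ, huk]
    simp only [ct, Finset.mul_sum, Finset.sum_mul, ← Finset.sum_add_distrib,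
      ← Finset.sum_sub_distrib]
    exact Finset.sum_congr rfl fun m _ => by ring
  change ttFun k κ i j l T = 0
  simp only [ttFun, ckt]
  simp only [c1, c2, c3, cc, ct]
  rw [hT]
  field_simp
  ring

/-- A hook-symmetric tensor every term of which carries a factor `k` or a Kronecker delta has
vanishing transverse traceless part: hook symmetry lets one apply the Young projector, which brings
the tensor to the form treated in `ttPart_gauge`. -/
theorem ttPart_source {d : ℕ} (hd : (d : ℂ) - 2 ≠ 0) (k : Fin d → ℂ) (κ : ℂ)
    (hκ : κ = ∑ m, k m * k m) (hκ0 : κ ≠ 0)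
    (X Y : Fin d → Fin d → ℂ) (hY : ∀ i j, Y i j = Y j i) (u v : Fin d → ℂ)
    (T : Fin d → Fin d → Fin d → ℂ)
    (hcyc : ∀ i j l, T i j l + T i l j + T l j i = 0)
    (hT : ∀ i j l, T i j l = k i * X j l + k j * X i l + k l * Y i j
      + kron i j * u l + kron i l * v j + kron j l * v i) (i j l : Fin d) :
    ttPart k κ i j l T = 0 := by
  refine ttPart_gauge hd k κ hκ hκ0 (fun i j => (2 * X i j - X j i - Y i j) / 3)
    (fun i => (u i - v i) / 3) T (fun i j l => ?_) i j l
  have h := hcyc i j l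
  rw [hT i l j, hT l j i, hY l j, kron_comm l j, kron_comm l i, kron_comm j i] at h
  have h0 := hT i j l
  linear_combination (1 / 3 : ℂ) * h + (2 / 3 : ℂ) * h0 + k l / 3 * hY i j

/-- A second-order operator with scalar coefficients commutes with a fixed linear functional applied
to a tensor-valued function. -/
theorem bessel_comp {d : ℕ} (L : (Fin d → Fin d → Fin d → ℂ) →ₗ[ℂ] ℂ)
    (φ : Fin d → Fin d → Fin d → ℝ → ℂ)
    (hdiff1 : ∀ i j l, ∀ z > (0 : ℝ), DifferentiableAt ℝ (φ i j l) z)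
    (hdiff2 : ∀ i j l, ∀ z > (0 : ℝ), DifferentiableAt ℝ (deriv (φ i j l)) z)
    (f : ℝ → ℂ) (hf : ∀ z > (0 : ℝ), f z = L fun i j l => φ i j l z)
    (p q r : ℂ) (z : ℝ) (hz : 0 < z) :
    deriv (deriv f) z + p * deriv f z - q * f z + r * f z
      = L fun i j l => deriv (deriv (φ i j l)) z + p * deriv (φ i j l) z
          - q * φ i j l z + r * φ i j l z := by
  have key : ∀ (χ : Fin d → Fin d → Fin d → ℝ → ℂ),
      (∀ i j l, ∀ z > (0 : ℝ), DifferentiableAt ℝ (χ i j l) z) →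
      ∀ g : ℝ → ℂ, (∀ z > (0 : ℝ), g z = L fun i j l => χ i j l z) →
      ∀ z > (0 : ℝ), deriv g z = L fun i j l => deriv (χ i j l) z := by
    intro χ hχ g hg z hz
    have h1 : HasDerivAt (fun z => fun i j l => χ i j l z)
        (fun i j l => deriv (χ i j l) z) z :=
      hasDerivAt_pi.2 fun i => hasDerivAt_pi.2 fun j => hasDerivAt_pi.2 fun l =>
        (hχ i j l z hz).hasDerivAt
    have h2 := ((L.toContinuousLinearMap.restrictScalars ℝ).hasFDerivAt).comp_hasDerivAt z h1
    refine (h2.congr_of_eventuallyEq ?_).deriv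
    filter_upwards [lt_mem_nhds hz] with w hw using hg w hw
  have d1 := key φ hdiff1 f hf
  have d2 := key (fun i j l => deriv (φ i j l)) hdiff2 (deriv f) d1
  rw [d2 z hz, d1 z hz, hf z hz]
  simp only [← smul_eq_mul (a := p), ← smul_eq_mul (a := q), ← smul_eq_mul (a := r)]
  rw [← map_smul, ← map_smul, ← map_smul, ← map_add, ← map_sub, ← map_add]
  rfl


/- STATEMENT 1: Lemma 2 of the paper. The traceless-transverse part of the
hook component of the massless hook field satisfies the homogeneous
Bessel-type equation. -/
theorem stmt_1 (d : ℕ) (hd : 3 ≤ d) (k : Fin d → ℝ) (hk : k ≠ 0)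
    (ksq : ℝ) (hksq : ksq = ∑ m, (k m) ^ 2)
    -- the hook component φ_{ij,l}
    (φ : Fin d → Fin d → Fin d → ℝ → ℂ)
    (hsym : ∀ i j l, φ i j l = φ j i l)
    (hcyc : ∀ i j l, ∀ z : ℝ, φ i j l z + φ i l j z + φ l j i z = 0)
    (hdiff1 : ∀ i j l, ∀ z > (0 : ℝ), DifferentiableAt ℝ (φ i j l) z)
    (hdiff2 : ∀ i j l, ∀ z > (0 : ℝ), DifferentiableAt ℝ (deriv (φ i j l)) z)
    -- the symmetric component φ_{ij} (denoted ψ)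
    (ψ : Fin d → Fin d → ℝ → ℂ)
    (hψsym : ∀ i j, ψ i j = ψ j i)
    (hψdiff : ∀ i j, ∀ z > (0 : ℝ), DifferentiableAt ℝ (ψ i j) z)
    -- the constants and the trace components φ_l, φ_0
    (A B : Fin d → ℂ) (C : ℂ) (a : Fin d → Fin d → ℂ)
    (hanti : ∀ i j, a i j = - a j i)
    (φv : Fin d → ℝ → ℂ)
    (hφv : ∀ l, ∀ z : ℝ, φv l z = A l / (z : ℂ) + B l / (z : ℂ) ^ 3)
    (φ0 : ℝ → ℂ) (hφ0 : ∀ z : ℝ, φ0 z = C / (z : ℂ) ^ 2)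
    -- (h1) traces and algebraic constraints
    (h1a : ∀ l, ∀ z > (0 : ℝ), (∑ i, φ i i l z) = φv l z)
    (h1b : ∀ z > (0 : ℝ), (∑ i, ψ i i z) = φ0 z)
    (h1c : (∑ m, (k m : ℂ) * A m) = 0)
    (h1d : Complex.I * (∑ m, (k m : ℂ) * B m) = ((d : ℂ) - 1) * C)
    -- (h2)
    (h2 : ∀ i, ∀ z > (0 : ℝ),
      Complex.I * ∑ m, (k m : ℂ) * ψ m i z
        = deriv (φv i) z + 3 * φv i z / (z : ℂ) + Complex.I * (k i : ℂ) * φ0 z)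
    -- (h3)
    (h3 : ∀ z > (0 : ℝ),
      (∑ m, ∑ n, (k m : ℂ) * (k n : ℂ) * ψ m n z) = (ksq : ℂ) * φ0 z)
    -- (h4)
    (h4 : ∀ i j, ∀ z > (0 : ℝ),
      Complex.I * ∑ m, (k m : ℂ) * φ i j m z
        = - deriv (ψ i j) z
          - (Complex.I / 2) * ((k i : ℂ) * φv j z + (k j : ℂ) * φv i z)
          + (if i = j then (1 : ℂ) else 0) * φ0 z / (z : ℂ)
          + (((d : ℂ) - 4) / (z : ℂ)) * ψ i j z)
    -- (h5)
    (h5 : ∀ i j, ∀ z > (0 : ℝ),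
      (∑ m, (k m : ℂ) * φ m i j z)
        = a i j / (2 * (z : ℂ) ^ 3)
          + (3 / 4) * ((k i : ℂ) * φv j z - (k j : ℂ) * φv i z)
          + (Complex.I / 2) * deriv (ψ i j) z
          - (1 / 4) * ((k i : ℂ) * φv j z + (k j : ℂ) * φv i z)
          - (Complex.I / (2 * (z : ℂ))) * (if i = j then (1 : ℂ) else 0) * φ0 z
          - (Complex.I * ((d : ℂ) - 4) / (2 * (z : ℂ))) * ψ i j z)
    -- (h6)
    (h6 : ∀ i, ∀ z > (0 : ℝ),
      (∑ m, ∑ n, (k m : ℂ) * (k n : ℂ) * φ m n i z)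
        = (ksq : ℂ) * φv i z + (k i : ℂ) * (∑ m, (k m : ℂ) * φv m z)
          + (2 * Complex.I / (z : ℂ)) * (k i : ℂ) * φ0 z
          + (2 * Complex.I * ((d : ℂ) - 2) / (z : ℂ))
              * ∑ m, (k m : ℂ) * ψ m i z)
    -- (h7) the field equation
    (h7 : ∀ i j l, ∀ z > (0 : ℝ),
      deriv (deriv (φ i j l)) z + ((7 - (d : ℂ)) / (z : ℂ)) * deriv (φ i j l) z
        - (ksq : ℂ) * φ i j l z
        + (k i : ℂ) * (∑ m, (k m : ℂ) * φ m j l z)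
        + (k j : ℂ) * (∑ m, (k m : ℂ) * φ m i l z)
        + (Complex.I / 2) * ((k i : ℂ) * deriv (ψ j l) z
            + (k j : ℂ) * deriv (ψ i l) z)
        - (k i : ℂ) * (k j : ℂ) * φv l z
        + (Complex.I * (6 - (d : ℂ)) / (2 * (z : ℂ)))
            * ((k i : ℂ) * ψ j l z + (k j : ℂ) * ψ i l z)
        - (2 * Complex.I / (z : ℂ)) * (k l : ℂ) * ψ i j z
        - (Complex.I / (z : ℂ)) * (if i = j then (1 : ℂ) else 0)
            * (∑ m, (k m : ℂ) * ψ m l z)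
        + (Complex.I / (z : ℂ)) * (if i = l then (1 : ℂ) else 0)
            * (∑ m, (k m : ℂ) * ψ m j z)
        + (Complex.I / (z : ℂ)) * (if l = j then (1 : ℂ) else 0)
            * (∑ m, (k m : ℂ) * ψ m i z)
        - (Complex.I / (z : ℂ)) * (if j = l then (1 : ℂ) else 0)
            * (k i : ℂ) * φ0 z
        - (Complex.I / (z : ℂ)) * (if i = l then (1 : ℂ) else 0)
            * (k j : ℂ) * φ0 z
        - (1 / (z : ℂ)) * (if i = j then (1 : ℂ) else 0) * deriv (φv l) z
        + ((9 - 3 * (d : ℂ)) / (z : ℂ) ^ 2) * φ i j l z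
        - (3 / (z : ℂ) ^ 2) * (if i = j then (1 : ℂ) else 0) * φv l z = 0)
    -- the traceless-transverse part
    (φbar : Fin d → Fin d → Fin d → ℝ → ℂ)
    (hφbar : ∀ i j l, ∀ z : ℝ, φbar i j l z =
      φ i j l z
      - (1 / (ksq : ℂ)) * ((k i : ℂ) * (∑ m, (k m : ℂ) * φ m j l z)
          + (k j : ℂ) * (∑ m, (k m : ℂ) * φ i m l z)
          + (k l : ℂ) * (∑ m, (k m : ℂ) * φ i j m z))
      + (1 / (ksq : ℂ) ^ 2)
        * ((k i : ℂ) * (k j : ℂ)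
              * (∑ m, ∑ n, (k m : ℂ) * (k n : ℂ) * φ m n l z)
          - (1 / 2) * (k i : ℂ) * (k l : ℂ)
              * (∑ m, ∑ n, (k m : ℂ) * (k n : ℂ) * φ m n j z)
          - (1 / 2) * (k j : ℂ) * (k l : ℂ)
              * (∑ m, ∑ n, (k m : ℂ) * (k n : ℂ) * φ m n i z))
      - (1 / ((d : ℂ) - 2))
        * ((if i = j then (1 : ℂ) else 0) - (k i : ℂ) * (k j : ℂ) / (ksq : ℂ))
        * (φv l z - (∑ m, ∑ n, (k m : ℂ) * (k n : ℂ) * φ m n l z) / (ksq : ℂ)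
            - (k l : ℂ) * (∑ m, (k m : ℂ) * φv m z) / (ksq : ℂ))
      + (1 / (2 * ((d : ℂ) - 2)))
        * ((if i = l then (1 : ℂ) else 0) - (k i : ℂ) * (k l : ℂ) / (ksq : ℂ))
        * (φv j z - (∑ m, ∑ n, (k m : ℂ) * (k n : ℂ) * φ m n j z) / (ksq : ℂ)
            - (k j : ℂ) * (∑ m, (k m : ℂ) * φv m z) / (ksq : ℂ))
      + (1 / (2 * ((d : ℂ) - 2)))
        * ((if j = l then (1 : ℂ) else 0) - (k j : ℂ) * (k l : ℂ) / (ksq : ℂ))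
        * (φv i z - (∑ m, ∑ n, (k m : ℂ) * (k n : ℂ) * φ m n i z) / (ksq : ℂ)
            - (k i : ℂ) * (∑ m, (k m : ℂ) * φv m z) / (ksq : ℂ))) :
    ∀ i j l, ∀ z > (0 : ℝ),
      deriv (deriv (φbar i j l)) z
        + ((7 - (d : ℂ)) / (z : ℂ)) * deriv (φbar i j l) z
        - (ksq : ℂ) * φbar i j l z
        + ((9 - 3 * (d : ℂ)) / (z : ℂ) ^ 2) * φbar i j l z = 0 := by
  intro i j l z hz
  have hd2 : (d : ℂ) - 2 ≠ 0 := by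
    rw [sub_ne_zero]; exact_mod_cast (by omega : d ≠ 2)
  have hκ : (ksq : ℂ) = ∑ m, (k m : ℂ) * (k m : ℂ) := by
    rw [hksq]; push_cast; simp only [sq]
  have hκ0 : (ksq : ℂ) ≠ 0 := by
    obtain ⟨m, hm⟩ := Function.ne_iff.1 hk
    have : 0 < ksq := by
      rw [hksq]
      exact Finset.sum_pos' (fun i _ => sq_nonneg _) ⟨m, Finset.mem_univ m, sq_pos_of_ne_zero hm⟩
    exact_mod_cast this.ne'
  rw [bessel_comp (ttPart (fun m => (k m : ℂ)) ksq i j l) φ hdiff1 hdiff2 (φbar i j l)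
      (fun w hw => by
        rw [hφbar]
        simp only [← h1a _ w hw]
        rfl) _ _ _ z hz]
  have hd1 : ∀ i j l, ∀ w > (0 : ℝ),
      deriv (φ i j l) w + deriv (φ i l j) w + deriv (φ l j i) w = 0 := fun i j l w hw => by
    have h := ((hdiff1 i j l w hw).hasDerivAt.add (hdiff1 i l j w hw).hasDerivAt).add
      (hdiff1 l j i w hw).hasDerivAt
    rw [← h.deriv, show φ i j l + φ i l j + φ l j i = fun _ => 0 from funext (hcyc i j l)]
    simp
  have hd2' : ∀ i j l, deriv (deriv (φ i j l)) z + deriv (deriv (φ i l j)) z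
      + deriv (deriv (φ l j i)) z = 0 := fun i j l => by
    have h := ((hdiff2 i j l z hz).hasDerivAt.add (hdiff2 i l j z hz).hasDerivAt).add
      (hdiff2 l j i z hz).hasDerivAt
    have h0 : deriv (φ i j l) + deriv (φ i l j) + deriv (φ l j i) =ᶠ[nhds z] fun _ => 0 := by
      filter_upwards [lt_mem_nhds hz] with w hw using hd1 i j l w hw
    rw [← h.deriv, h0.deriv_eq]
    simp
  -- `X`, `Y`, `u`, `v` are read off from the field equation solved for `E φ`; the term
  -- `k_i k_j φ_l` is split evenly between the two factors `k_i X_{jl}` and `k_j X_{il}`.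
  refine ttPart_source hd2 _ _ hκ hκ0
    (fun j l => -((∑ m, (k m : ℂ) * φ m j l z) + (Complex.I / 2) * deriv (ψ j l) z
      - (1 / 2) * (k j : ℂ) * φv l z + (Complex.I * (6 - (d : ℂ)) / (2 * (z : ℂ))) * ψ j l z))
    (fun i j => (2 * Complex.I / (z : ℂ)) * ψ i j z) (fun i j => by rw [hψsym i j])
    (fun l => (Complex.I / (z : ℂ)) * (∑ m, (k m : ℂ) * ψ m l z)
      + (1 / (z : ℂ)) * deriv (φv l) z + (3 / (z : ℂ) ^ 2) * φv l z)
    (fun j => -((Complex.I / (z : ℂ)) * (∑ m, (k m : ℂ) * ψ m j z)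
      - (Complex.I / (z : ℂ)) * (k j : ℂ) * φ0 z))
    _ (fun i j l => ?_) (fun i j l => ?_) i j l
  · linear_combination hd2' i j l + ((7 - (d : ℂ)) / (z : ℂ)) * hd1 i j l z hz
      + (-(ksq : ℂ) + (9 - 3 * (d : ℂ)) / (z : ℂ) ^ 2) * hcyc i j l z
  · have h := h7 i j l z hz
    simp only [← kron.eq_1] at h
    rw [kron_comm l j] at h
    linear_combination h
end

section
/- Let d ≥ 1 be an integer. On the upper half-space {(z,x) ∈ ℝ × ℝ^d : z > 0} with coordinates x^μ, μ = 0,…,d, x^0 = z, define the Christoffel symbols Γ^ρ_{μν}(z,x) = −(1/z)(δ^0_μ δ^ρ_ν + δ^0_ν δ^ρ_μ − δ^{ρ0} δ_{μν}) and the inverse metric g^{μν}(z,x) = z² δ^{μν}. Let χ_{μν} be smooth functions on the upper half-space with χ_{μν} = −χ_{νμ}, and define: ∇_μ χ_{νρ} := ∂_μ χ_{νρ} − Σ_σ Γ^σ_{μν} χ_{σρ} − Σ_σ Γ^σ_{μρ} χ_{νσ}; δφ_{μν,ρ} := ∇_μ χ_{νρ} + ∇_ν χ_{μρ}; δφ_ρ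 := Σ_{α,β} g^{αβ} δφ_{αβ,ρ}; ∇_λ δφ_{μν,ρ} := ∂_λ δφ_{μν,ρ} − Σ_σ Γ^σ_{λμ} δφ_{σν,ρ} − Σ_σ Γ^σ_{λν} δφ_{μσ,ρ} − Σ_σ Γ^σ_{λρ} δφ_{μν,σ}; and ∇_μ δφ_ν := ∂_μ δφ_ν − Σ_σ Γ^σ_{μν} δφ_σ. Then for all μ, ν and all points of the upper half-space: 2 Σ_{λ,σ} g^{λσ} ∇_σ δφ_{μν,λ} + ∇_μ δφ_ν + ∇_ν δφ_μ = 0. -/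
/-!
In Poincaré coordinates every contraction with `Γ` has three terms, so everything can be written
through `χ`, its first derivatives and its second derivatives. Let `w = 1 / z`, let `n` be the
coordinate vector of `z`, and let `V ρ = ∑ α, ∂ α χ α ρ` be the flat divergence. Antisymmetry of `χ`
gives

* `δφ μ ν ρ = ∂ μ χ ν ρ + ∂ ν χ μ ρ + w (3 n μ χ ν ρ + 3 n ν χ μ ρ - 2 δ μ ν χ 0 ρ
  - δ μ ρ χ ν 0 - δ ν ρ χ μ 0)`,
* `∑ α, δφ α α ρ = 2 V ρ + (6 - 2 d) w χ 0 ρ`, which is `-2 ∑ α, δφ α ρ α`.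

In the divergence `∑ lam, ∂ lam δφ μ ν lam` the second derivatives combine, by their symmetry and the
antisymmetry of `χ`, to `-(∂ μ V ν + ∂ ν V μ)`, which cancels the second derivatives in the
symmetrized gradient of the trace. The terms with fewer derivatives, which come from
the Christoffel symbols and from differentiating powers of `z`, cancel as well.
-/

/-- Contraction of a covector `f` with the Christoffel symbols, with `w = 1 / z`. -/
lemma christoffel_contract {d : ℕ} (w : ℝ) (μ ν : Fin (d + 1)) (f : Fin (d + 1) → ℝ) :
    (∑ σ, (-w * ((if μ = 0 then (1 : ℝ) else 0) * (if σ = ν then 1 else 0)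
        + (if ν = 0 then (1 : ℝ) else 0) * (if σ = μ then 1 else 0)
        - (if σ = 0 then (1 : ℝ) else 0) * (if μ = ν then 1 else 0))) * f σ) =
      -w * ((if μ = 0 then (1 : ℝ) else 0) * f ν + (if ν = 0 then (1 : ℝ) else 0) * f μ
        - (if μ = ν then (1 : ℝ) else 0) * f 0) := by
  have h : ∀ σ, (-w * ((if μ = 0 then (1 : ℝ) else 0) * (if σ = ν then 1 else 0)
        + (if ν = 0 then (1 : ℝ) else 0) * (if σ = μ then 1 else 0)
        - (if σ = 0 then (1 : ℝ) else 0) * (if μ = ν then 1 else 0))) * f σ =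
      (if σ = ν then -w * (if μ = 0 then (1 : ℝ) else 0) * f σ else 0)
      + (if σ = μ then -w * (if ν = 0 then (1 : ℝ) else 0) * f σ else 0)
      - (if σ = 0 then -w * (if μ = ν then (1 : ℝ) else 0) * f σ else 0) := by
    intro σ
    generalize (if μ = 0 then (1 : ℝ) else 0) = A
    generalize (if ν = 0 then (1 : ℝ) else 0) = B
    generalize (if μ = ν then (1 : ℝ) else 0) = C
    split_ifs <;> ring
  simp only [h, Finset.sum_add_distrib, Finset.sum_sub_distrib, Finset.sum_ite_eq',
    Finset.mem_univ, if_true]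
  ring

/-- The derivative of `1 / z` along the coordinate direction `a`. -/
lemma fderiv_inv_coord {d : ℕ} {p : Fin (d + 1) → ℝ} (hp : p 0 ≠ 0) (a : Fin (d + 1)) :
    DifferentiableAt ℝ (fun q : Fin (d + 1) → ℝ => 1 / q 0) p ∧
    fderiv ℝ (fun q : Fin (d + 1) → ℝ => 1 / q 0) p (Pi.single a 1) =
      -(1 / p 0) ^ 2 * (if a = 0 then 1 else 0) := by
  have h0 : HasFDerivAt (fun q : Fin (d + 1) → ℝ => q 0)
      (ContinuousLinearMap.proj (R := ℝ) (φ := fun _ : Fin (d + 1) => ℝ) 0) p :=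
    hasFDerivAt_apply 0 p
  have h1 := (hasDerivAt_inv hp).comp_hasFDerivAt p h0
  have h2 := h1.congr_of_eventuallyEq (f₁ := fun q : Fin (d + 1) → ℝ => 1 / q 0)
    (Filter.Eventually.of_forall fun q => by simp)
  refine ⟨h2.differentiableAt, ?_⟩
  rw [h2.fderiv]
  by_cases h : a = 0
  · subst h; simp
  · have h' : (0 : Fin (d + 1)) ≠ a := fun e => h e.symm
    simp [h, h']

/-- The derivative of `z` along the coordinate direction `a`. -/
lemma fderiv_coord {d : ℕ} (p : Fin (d + 1) → ℝ) (a : Fin (d + 1)) :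
    fderiv ℝ (fun q : Fin (d + 1) → ℝ => q 0) p (Pi.single a 1) = if a = 0 then 1 else 0 := by
  rw [(hasFDerivAt_apply (𝕜 := ℝ) (0 : Fin (d + 1)) p).fderiv]
  simp [Pi.single_apply, eq_comm]

lemma one_add_one_le_top : (1 + 1 : WithTop ℕ∞) ≤ ((⊤ : ℕ∞) : WithTop ℕ∞) := by
  rw [one_add_one_eq_two]
  exact WithTop.coe_le_coe.2 (le_top : (2 : ℕ∞) ≤ ⊤)

/-- Second partial derivatives of a smooth function commute. -/
lemma second_partial_comm {d : ℕ} {f : (Fin (d + 1) → ℝ) → ℝ} (hf : ContDiff ℝ (⊤ : ℕ∞) f)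
    (p u v : Fin (d + 1) → ℝ) :
    fderiv ℝ (fun q => fderiv ℝ f q u) p v = fderiv ℝ (fun q => fderiv ℝ f q v) p u := by
  have hd : DifferentiableAt ℝ (fderiv ℝ f) p :=
    (hf.fderiv_right (m := 1) one_add_one_le_top).differentiable (by simp) p
  have key : ∀ u v, fderiv ℝ (fun q => fderiv ℝ f q u) p v = fderiv ℝ (fderiv ℝ f) p v u := by
    intro u v
    rw [fderiv_clm_apply hd (differentiableAt_const u)]
    simp
  rw [key, key]
  have hs : IsSymmSndFDerivAt ℝ f p :=
    hf.contDiffAt.isSymmSndFDerivAt (by simpa [one_add_one_eq_two] using one_add_one_le_top)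
  exact hs v u


/- STATEMENT 9: gauge invariance of the differential constraints
2∇^λ δφ_{μν,λ} + ∇_μ δφ_ν + ∇_ν δφ_μ = 0 for the hook gauge variation
δφ_{μν,ρ} = ∇_μ χ_{νρ} + ∇_ν χ_{μρ} on Euclidean AdS_{d+1}. -/
theorem stmt_9 (d : ℕ) (hd : 1 ≤ d)
    (Γ : Fin (d + 1) → Fin (d + 1) → Fin (d + 1) → (Fin (d + 1) → ℝ) → ℝ)
    (hΓ : ∀ ρ μ ν p, Γ ρ μ ν p =
      -(1 / p 0) * ((if μ = 0 then (1 : ℝ) else 0) * (if ρ = ν then 1 else 0)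
        + (if ν = 0 then (1 : ℝ) else 0) * (if ρ = μ then 1 else 0)
        - (if ρ = 0 then (1 : ℝ) else 0) * (if μ = ν then 1 else 0)))
    (ginv : Fin (d + 1) → Fin (d + 1) → (Fin (d + 1) → ℝ) → ℝ)
    (hginv : ∀ μ ν p, ginv μ ν p = (p 0) ^ 2 * (if μ = ν then (1 : ℝ) else 0))
    (χ : Fin (d + 1) → Fin (d + 1) → (Fin (d + 1) → ℝ) → ℝ)
    (hχs : ∀ μ ν, ContDiff ℝ (⊤ : ℕ∞) (χ μ ν))
    (hχa : ∀ μ ν p, χ μ ν p = - χ ν μ p)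
    (nχ : Fin (d + 1) → Fin (d + 1) → Fin (d + 1) → (Fin (d + 1) → ℝ) → ℝ)
    (hnχ : ∀ μ ν ρ p, nχ μ ν ρ p =
      fderiv ℝ (χ ν ρ) p (Pi.single μ 1)
      - (∑ σ, Γ σ μ ν p * χ σ ρ p) - ∑ σ, Γ σ μ ρ p * χ ν σ p)
    (δφ : Fin (d + 1) → Fin (d + 1) → Fin (d + 1) → (Fin (d + 1) → ℝ) → ℝ)
    (hδφ : ∀ μ ν ρ p, δφ μ ν ρ p = nχ μ ν ρ p + nχ ν μ ρ p)
    (δφt : Fin (d + 1) → (Fin (d + 1) → ℝ) → ℝ)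
    (hδφt : ∀ ρ p, δφt ρ p = ∑ α, ∑ β, ginv α β p * δφ α β ρ p)
    (nδφ : Fin (d + 1) → Fin (d + 1) → Fin (d + 1) → Fin (d + 1) →
      (Fin (d + 1) → ℝ) → ℝ)
    (hnδφ : ∀ lam μ ν ρ p, nδφ lam μ ν ρ p =
      fderiv ℝ (δφ μ ν ρ) p (Pi.single lam 1)
      - (∑ σ, Γ σ lam μ p * δφ σ ν ρ p)
      - (∑ σ, Γ σ lam ν p * δφ μ σ ρ p)
      - ∑ σ, Γ σ lam ρ p * δφ μ ν σ p)
    (nδφt : Fin (d + 1) → Fin (d + 1) → (Fin (d + 1) → ℝ) → ℝ)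
    (hnδφt : ∀ μ ν p, nδφt μ ν p =
      fderiv ℝ (δφt ν) p (Pi.single μ 1) - ∑ σ, Γ σ μ ν p * δφt σ p) :
    ∀ μ ν : Fin (d + 1), ∀ p : Fin (d + 1) → ℝ, 0 < p 0 →
      2 * (∑ lam, ∑ σ, ginv lam σ p * nδφ σ μ ν lam p)
      + nδφt μ ν p + nδφt ν μ p = 0 := by
  intro μ ν p hp
  have hp0 : p 0 ≠ 0 := hp.ne'
  -- First partial derivatives of `χ`.
  set D : Fin (d + 1) → Fin (d + 1) → Fin (d + 1) → (Fin (d + 1) → ℝ) → ℝ :=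
    fun a i j q => fderiv ℝ (χ i j) q (Pi.single a 1) with hD
  set n : Fin (d + 1) → ℝ := fun a => if a = 0 then 1 else 0 with hn
  set δ : Fin (d + 1) → Fin (d + 1) → ℝ := fun a b => if a = b then 1 else 0 with hδ
  have δ_sum : ∀ (a : Fin (d + 1)) (f : Fin (d + 1) → ℝ), ∑ l, δ a l * f l = f a := by
    intro a f; simp [hδ]
  have δ_sum' : ∀ (a : Fin (d + 1)) (f : Fin (d + 1) → ℝ), ∑ l, δ l a * f l = f a := by
    intro a f; simp [hδ]
  have n_sum : ∀ f : Fin (d + 1) → ℝ, ∑ l, n l * f l = f 0 := by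
    intro f; simp [hn]
  have δ_self : ∀ a, δ a a = 1 := by intro a; simp [hδ]
  have n_zero : n 0 = 1 := by simp [hn]
  have δ_zero : ∀ a, δ a 0 = n a := by intro a; simp [hδ, hn]
  have δ_zero' : ∀ a, δ 0 a = n a := by intro a; simp [hδ, hn, eq_comm]
  have δ_symm : ∀ a b, δ a b = δ b a := by intro a b; simp [hδ, eq_comm]
  have Γ_contract : ∀ a b q (f : Fin (d + 1) → ℝ), ∑ σ, Γ σ a b q * f σ =
      -(1 / q 0) * (n a * f b + n b * f a - δ a b * f 0) := by
    intro a b q f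
    simp only [hΓ]
    exact christoffel_contract (1 / q 0) a b f
  have χ_diff : ∀ i j q, DifferentiableAt ℝ (χ i j) q := fun i j q =>
    (hχs i j).differentiable (by simp) q
  have D_diff : ∀ a i j q, DifferentiableAt ℝ (D a i j) q := fun a i j q =>
    (((hχs i j).fderiv_right (m := 1) one_add_one_le_top).differentiable
      (by simp) q).clm_apply (differentiableAt_const _)
  have χ_fun : ∀ i j, χ i j = fun q => - χ j i q := fun i j => funext (hχa i j)
  have D_anti : ∀ a i j q, D a i j q = - D a j i q := by
    intro a i j q
    simp only [hD]
    rw [χ_fun i j, fderiv_fun_neg]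
    simp
  -- Second partial derivatives of `χ` at `p`.
  set H : Fin (d + 1) → Fin (d + 1) → Fin (d + 1) → Fin (d + 1) → ℝ :=
    fun a b i j => fderiv ℝ (D b i j) p (Pi.single a 1) with hH
  have H_anti : ∀ a b i j, H a b i j = - H a b j i := by
    intro a b i j
    simp only [hH]
    rw [show D b i j = fun q => - D b j i q from funext (D_anti b i j), fderiv_fun_neg]
    simp
  have H_symm : ∀ a b i j, H a b i j = H b a i j := fun a b i j =>
    second_partial_comm (hχs i j) p _ _
  have χ_diag : ∀ i q, χ i i q = 0 := fun i q => by linarith [hχa i i q]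
  have D_diag : ∀ a i q, D a i i q = 0 := fun a i q => by linarith [D_anti a i i q]
  have φ_eq : ∀ a b c q, δφ a b c q = D a b c q + D b a c q + 1 / q 0 *
      (3 * n a * χ b c q + 3 * n b * χ a c q - 2 * δ a b * χ 0 c q
        - δ a c * χ b 0 q - δ b c * χ a 0 q) := by
    intro a b c q
    rw [hδφ, hnχ, hnχ, Γ_contract a b q (fun σ => χ σ c q), Γ_contract a c q (fun σ => χ b σ q),
      Γ_contract b a q (fun σ => χ σ c q), Γ_contract b c q (fun σ => χ a σ q), δ_symm b a,
      hχa b a]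
    simp only [hD]
    ring
  -- The flat divergence of `χ` and its gradient at `p`.
  set V : Fin (d + 1) → (Fin (d + 1) → ℝ) → ℝ := fun c q => ∑ l, D l l c q with hV
  set W : Fin (d + 1) → Fin (d + 1) → ℝ := fun a c => ∑ l, H a l l c with hW
  have V_swap : ∀ c q, ∑ l, D l c l q = - V c q := by
    intro c q
    simp only [hV, ← Finset.sum_neg_distrib]
    exact Finset.sum_congr rfl fun l _ => D_anti l c l q
  have card_sum : ∀ x : ℝ, ∑ _l : Fin (d + 1), x = (d + 1) * x := by
    intro x; simp
  have trace_eq : ∀ c q, q 0 ≠ 0 → δφt c q = 2 * (q 0 ^ 2 * V c q)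
      + (6 - 2 * d) * (q 0 * χ 0 c q) := by
    intro c q hq
    have h1 : ∀ α, ∑ β, ginv α β q * δφ α β c q = q 0 ^ 2 * δφ α α c q := by
      intro α
      simp [hginv]
    have h2 : ∀ α, δφ α α c q = 2 * D α α c q + 6 * (1 / q 0) * (n α * χ α c q)
        - (2 * (1 / q 0) * χ 0 c q) - 2 * (1 / q 0) * (δ α c * χ α 0 q) := by
      intro α; rw [φ_eq, δ_self]; ring
    rw [hδφt, Finset.sum_congr rfl fun α _ => h1 α, ← Finset.mul_sum,
      Finset.sum_congr rfl fun α _ => h2 α]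
    simp only [Finset.sum_add_distrib, Finset.sum_sub_distrib, ← Finset.mul_sum]
    rw [n_sum, δ_sum', card_sum, hχa c 0]
    change q 0 ^ 2 * (2 * V c q + _ - _ - _) = _
    field_simp
    ring
  have mixed_trace : ∀ c, ∑ l, δφ l c l p = - V c p + (d - 3) * (1 / p 0) * χ 0 c p := by
    intro c
    have h2 : ∀ l, δφ l c l p = D l c l p + 3 * (1 / p 0) * (n l * χ c l p)
        - 2 * (1 / p 0) * (δ l c * χ 0 l p) - 1 / p 0 * χ c 0 p
        - 1 / p 0 * (δ c l * χ l 0 p) := by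
      intro l; rw [φ_eq, δ_self, χ_diag, D_diag]; ring
    rw [Finset.sum_congr rfl fun l _ => h2 l]
    simp only [Finset.sum_add_distrib, Finset.sum_sub_distrib, ← Finset.mul_sum]
    rw [n_sum, δ_sum, δ_sum', card_sum, V_swap, hχa c 0]
    ring
  have φ_deriv : ∀ l a b c, fderiv ℝ (δφ a b c) p (Pi.single l 1) =
      H l a b c + H l b a c
      + 1 / p 0 * (3 * n a * D l b c p + 3 * n b * D l a c p - 2 * δ a b * D l 0 c p
        - δ a c * D l b 0 p - δ b c * D l a 0 p)
      - (1 / p 0) ^ 2 * n l * (3 * n a * χ b c p + 3 * n b * χ a c p - 2 * δ a b * χ 0 c p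
        - δ a c * χ b 0 p - δ b c * χ a 0 p) := by
    intro l a b c
    obtain ⟨w1, w2⟩ := fderiv_inv_coord hp0 l
    have hχ' : ∀ i j, HasFDerivAt (χ i j) (fderiv ℝ (χ i j) p) p := fun i j =>
      (χ_diff i j p).hasFDerivAt
    have hD' : ∀ a i j, HasFDerivAt (D a i j) (fderiv ℝ (D a i j) p) p := fun a i j =>
      (D_diff a i j p).hasFDerivAt
    have h := ((hD' a b c).add (hD' b a c)).add (w1.hasFDerivAt.mul
      ((((((hχ' b c).const_mul (3 * n a)).add ((hχ' a c).const_mul (3 * n b))).sub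
        ((hχ' 0 c).const_mul (2 * δ a b))).sub ((hχ' b 0).const_mul (δ a c))).sub
        ((hχ' a 0).const_mul (δ b c))))
    have h' := h.congr_of_eventuallyEq (f₁ := δφ a b c)
      (Filter.Eventually.of_forall fun q => by rw [φ_eq]; rfl)
    rw [h'.fderiv]
    simp only [add_apply, sub_apply,
      smul_apply, smul_eq_mul, Pi.add_apply, Pi.sub_apply, w2]
    simp only [hH, hD, hn]
    ring
  have trace_deriv : ∀ a c, fderiv ℝ (δφt c) p (Pi.single a 1) =
      2 * (2 * p 0 * n a * V c p + p 0 ^ 2 * W a c)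
      + (6 - 2 * d) * (n a * χ 0 c p + p 0 * D a 0 c p) := by
    intro a c
    have hz : HasFDerivAt (fun q : Fin (d + 1) → ℝ => q 0)
      (fderiv ℝ (fun q : Fin (d + 1) → ℝ => q 0) p) p :=
      (hasFDerivAt_apply (𝕜 := ℝ) (0 : Fin (d + 1)) p).differentiableAt.hasFDerivAt
    have hVd : HasFDerivAt (V c) (∑ l, fderiv ℝ (D l l c) p) p :=
      HasFDerivAt.fun_sum fun l _ => (D_diff l l c p).hasFDerivAt
    have h := (((hz.mul hz).mul hVd).const_mul 2).add
      ((hz.mul (χ_diff 0 c p).hasFDerivAt).const_mul (6 - 2 * (d : ℝ)))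
    have hne : ∀ᶠ q : Fin (d + 1) → ℝ in nhds p, q 0 ≠ 0 :=
      (continuous_apply (0 : Fin (d + 1))).continuousAt.eventually_ne hp0
    have h' := h.congr_of_eventuallyEq (f₁ := δφt c)
      (hne.mono fun q hq => by
        rw [trace_eq c q hq]
        simp only [Pi.add_apply, Pi.mul_apply]
        ring)
    rw [h'.fderiv]
    simp only [add_apply, smul_apply, smul_eq_mul,
      sum_apply, Pi.mul_apply, fderiv_coord]
    simp only [hW, hH, hD, hn]
    ring
  have flat_div : ∀ a b, ∑ l, fderiv ℝ (δφ a b l) p (Pi.single l 1) =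
      - W a b - W b a + 1 / p 0 * (- 3 * n a * V b p - 3 * n b * V a p + 2 * δ a b * V 0 p
        - D a b 0 p - D b a 0 p)
      - (1 / p 0) ^ 2 * (2 * n a * χ b 0 p + 2 * n b * χ a 0 p) := by
    intro a b
    have hs : ∀ l, fderiv ℝ (δφ a b l) p (Pi.single l 1) =
        - H a l l b - H b l l a + 3 * (1 / p 0) * n a * D l b l p
        + 3 * (1 / p 0) * n b * D l a l p - 2 * (1 / p 0) * δ a b * D l 0 l p
        - 1 / p 0 * (δ a l * D l b 0 p) - 1 / p 0 * (δ b l * D l a 0 p)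
        - (1 / p 0) ^ 2 * (n l * (3 * n a * χ b l p + 3 * n b * χ a l p - 2 * δ a b * χ 0 l p
        - δ a l * χ b 0 p - δ b l * χ a 0 p)) := by
      intro l
      rw [φ_deriv, H_symm l a, H_symm l b, H_anti a l b l, H_anti b l a l]
      ring
    rw [Finset.sum_congr rfl fun l _ => hs l]
    simp only [Finset.sum_add_distrib, Finset.sum_sub_distrib, ← Finset.mul_sum,
      Finset.sum_neg_distrib]
    rw [n_sum, δ_sum, δ_sum, V_swap, V_swap, V_swap, χ_diag, δ_zero, δ_zero]
    simp only [hW]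
    ring
  have div_eq : ∑ lam, ∑ σ, ginv lam σ p * nδφ σ μ ν lam p =
      p 0 ^ 2 * ((∑ l, fderiv ℝ (δφ μ ν l) p (Pi.single l 1)) + 1 / p 0 * ((3 - d) * δφ μ ν 0 p
        + n μ * (∑ l, δφ l ν l p) + n ν * (∑ l, δφ l μ l p) - δφ 0 ν μ p - δφ μ 0 ν p)) := by
    have φ_symm : ∀ a b c, δφ a b c p = δφ b a c p := by
      intro a b c; rw [hδφ, hδφ]; ring
    have h1 : ∀ l, ∑ σ, ginv l σ p * nδφ σ μ ν l p = p 0 ^ 2 * nδφ l μ ν l p := by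
      intro l
      simp [hginv]
    have h2 : ∀ l, nδφ l μ ν l p = fderiv ℝ (δφ μ ν l) p (Pi.single l 1)
        + 4 * (1 / p 0) * (n l * δφ μ ν l p) + 1 / p 0 * n μ * δφ l ν l p
        + 1 / p 0 * n ν * δφ l μ l p - 1 / p 0 * (δ l μ * δφ 0 ν l p)
        - 1 / p 0 * (δ l ν * δφ μ 0 l p) - 1 / p 0 * δφ μ ν 0 p := by
      intro l
      rw [hnδφ, Γ_contract l μ p (fun σ => δφ σ ν l p), Γ_contract l ν p (fun σ => δφ μ σ l p),
        Γ_contract l l p (fun σ => δφ μ ν σ p), δ_self, φ_symm l μ l]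
      ring
    rw [Finset.sum_congr rfl fun l _ => h1 l, ← Finset.mul_sum,
      Finset.sum_congr rfl fun l _ => h2 l]
    simp only [Finset.sum_add_distrib, Finset.sum_sub_distrib, ← Finset.mul_sum]
    rw [n_sum, δ_sum', δ_sum', card_sum]
    ring
  rw [div_eq, flat_div, mixed_trace, mixed_trace, hnδφt, hnδφt, trace_deriv, trace_deriv,
    Γ_contract μ ν p (fun σ => δφt σ p), Γ_contract ν μ p (fun σ => δφt σ p),
    trace_eq μ p hp0, trace_eq ν p hp0, trace_eq 0 p hp0, φ_eq, φ_eq, φ_eq]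
  simp only [δ_zero, δ_zero', δ_symm ν μ, χ_diag, n_zero]
  rw [hχa μ 0, hχa ν 0, hχa ν μ, D_anti μ ν 0, D_anti ν μ 0, D_anti 0 ν μ]
  field_simp
  ring
end

section
/- Let d ≥ 1 be an integer with d ≠ 2, and let M > 0. For every x ∈ ℝ^d with x ≠ 0, the Euclidean Laplacian Δ = Σ_{i=1}^d ∂²/∂x_i² applied to the function y ↦ ln(M|y|)·|y|^{2−d} satisfies Δ[ln(M|y|)·|y|^{2−d}](x) = −(d−2)·|x|^{−d}. Equivalently, |x|^{−d} = Δ G(x) with G(y) = −(1/(2d−4)) ln(M²|y|²) |y|^{2−d}. -/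
/-!
For a radial function `φ(‖y‖)` the gradient away from `0` is `(φ'(r) / r) y`, where `r = ‖y‖`.
Applied to `φ(r) = log (M r) r ^ (2 - d)`, this gives the `i`-th partial derivative `g(r) yᵢ` with
`g(r) = r ^ (-d) (1 + (2 - d) log (M r))`. Applied once more to `g` it gives the second partial
derivative `(g'(r) / r) xᵢ² + g(r)`, whose sum over `i` is `r g'(r) + d g(r)`. Here
`r g'(r) = -d g(r) + (2 - d) r ^ (-d)`, so all logarithms cancel.
-/

/-- Chain rule for a radial function: its gradient at `x ≠ 0` is `(φ'(‖x‖) / ‖x‖) x`. -/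
lemma hasFDerivAt_radial {E : Type*} [NormedAddCommGroup E] [InnerProductSpace ℝ E]
    {φ : ℝ → ℝ} {φ' : ℝ} {x : E} (hx : x ≠ 0) (h : HasDerivAt φ φ' ‖x‖) :
    HasFDerivAt (fun y : E => φ ‖y‖) ((φ' / ‖x‖) • innerSL ℝ x) x := by
  have hn : ‖x‖ ≠ 0 := norm_ne_zero_iff.2 hx
  have h1 : HasFDerivAt (fun y : E => ‖y‖ ^ 2) (2 • innerSL ℝ x) x :=
    (hasStrictFDerivAt_norm_sq x).hasFDerivAt
  -- The norm is differentiated as the square root of the smooth function `‖y‖ ^ 2`.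
  have h2 := h1.sqrt (pow_ne_zero 2 hn)
  simp only [Real.sqrt_sq (norm_nonneg _)] at h2
  refine (h.comp_hasFDerivAt x h2).congr_fderiv ?_
  ext v
  simp
  field_simp

lemma hasDerivAt_log_mul_rpow {M r : ℝ} (hM : 0 < M) (hr : 0 < r) (a : ℝ) :
    HasDerivAt (fun s : ℝ => Real.log (M * s) * s ^ (2 - a))
      (r ^ (-a) * (1 + (2 - a) * Real.log (M * r)) * r) r := by
  have hl : HasDerivAt (fun s : ℝ => Real.log (M * s)) (M * 1 / (M * r)) r :=
    ((hasDerivAt_id r).const_mul M).log (mul_pos hM hr).ne'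
  refine (hl.mul (Real.hasDerivAt_rpow_const (p := 2 - a) (Or.inl hr.ne'))).congr_deriv ?_
  have e1 : r ^ (2 - a) = r ^ (-a) * r ^ 2 := by
    rw [← Real.rpow_natCast r 2, ← Real.rpow_add hr]; congr 1; push_cast; ring
  have e2 : r ^ (2 - a - 1) = r ^ (-a) * r := by
    rw [← Real.rpow_add_one hr.ne']; congr 1; ring
  rw [e1, e2]
  field_simp

lemma hasDerivAt_rpow_mul_one_add_log {M r : ℝ} (hM : 0 < M) (hr : 0 < r) (a : ℝ) :
    HasDerivAt (fun s : ℝ => s ^ (-a) * (1 + (2 - a) * Real.log (M * s)))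
      ((-a * (r ^ (-a) * (1 + (2 - a) * Real.log (M * r))) + (2 - a) * r ^ (-a)) / r) r := by
  have hl : HasDerivAt (fun s : ℝ => Real.log (M * s)) (M * 1 / (M * r)) r :=
    ((hasDerivAt_id r).const_mul M).log (mul_pos hM hr).ne'
  refine ((Real.hasDerivAt_rpow_const (p := -a) (Or.inl hr.ne')).mul
    ((hl.const_mul (2 - a)).const_add 1)).congr_deriv ?_
  rw [Real.rpow_sub_one hr.ne']
  field_simp

/- STATEMENT 10: d-dimensional differential regularization identity:
Δ[ln(M|y|)·|y|^{2−d}] = −(d−2)·|x|^{−d} away from the origin. -/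
theorem stmt_10 (d : ℕ) (hd : 1 ≤ d) (hd2 : d ≠ 2) (M : ℝ) (hM : 0 < M)
    (x : EuclideanSpace ℝ (Fin d)) (hx : x ≠ 0) :
    (∑ i : Fin d, fderiv ℝ (fun y : EuclideanSpace ℝ (Fin d) =>
        fderiv ℝ (fun y' : EuclideanSpace ℝ (Fin d) =>
          Real.log (M * ‖y'‖) * ‖y'‖ ^ ((2 : ℝ) - d)) y (EuclideanSpace.single i 1))
      x (EuclideanSpace.single i 1))
    = -((d : ℝ) - 2) * ‖x‖ ^ (-(d : ℝ)) := by
  have hr : 0 < ‖x‖ := norm_pos_iff.2 hx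
  set G : ℝ := ‖x‖ ^ (-(d : ℝ)) * (1 + (2 - d) * Real.log (M * ‖x‖)) with hG
  set D : ℝ := -d * G + (2 - d) * ‖x‖ ^ (-(d : ℝ)) with hD
  have key : ∀ i : Fin d, fderiv ℝ (fun y : EuclideanSpace ℝ (Fin d) =>
        fderiv ℝ (fun y' : EuclideanSpace ℝ (Fin d) =>
          Real.log (M * ‖y'‖) * ‖y'‖ ^ ((2 : ℝ) - d)) y (EuclideanSpace.single i 1))
      x (EuclideanSpace.single i 1) = D / ‖x‖ ^ 2 * x i ^ 2 + G := by
    intro i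
    -- The formula for the first partial derivative is needed on a neighbourhood of `x`,
    -- since it is differentiated again.
    have h1 : (fun y : EuclideanSpace ℝ (Fin d) =>
        fderiv ℝ (fun y' : EuclideanSpace ℝ (Fin d) =>
          Real.log (M * ‖y'‖) * ‖y'‖ ^ ((2 : ℝ) - d)) y (EuclideanSpace.single i 1))
        =ᶠ[nhds x] fun y => (‖y‖ ^ (-(d : ℝ)) * (1 + (2 - d) * Real.log (M * ‖y‖))) * y i := by
      filter_upwards [isOpen_ne.mem_nhds hx] with y hy
      have hy' : 0 < ‖y‖ := norm_pos_iff.2 hy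
      rw [(hasFDerivAt_radial hy (hasDerivAt_log_mul_rpow hM hy' d)).fderiv,
        mul_div_cancel_right₀ _ hy'.ne']
      simp [EuclideanSpace.inner_single_right]
    have h2 : HasFDerivAt (fun y : EuclideanSpace ℝ (Fin d) => y i)
        (EuclideanSpace.proj i : EuclideanSpace ℝ (Fin d) →L[ℝ] ℝ) x :=
      (EuclideanSpace.proj i : EuclideanSpace ℝ (Fin d) →L[ℝ] ℝ).hasFDerivAt
    have h3 := (hasFDerivAt_radial hx (hasDerivAt_rpow_mul_one_add_log hM hr d)).mul h2
    rw [← hG, ← hD] at h3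
    rw [h1.fderiv_eq]
    refine (congrArg (fun L : EuclideanSpace ℝ (Fin d) →L[ℝ] ℝ =>
      L (EuclideanSpace.single i 1)) h3.fderiv).trans ?_
    simp [EuclideanSpace.inner_single_right]
    field_simp
    ring
  simp only [key]
  rw [Finset.sum_add_distrib, ← Finset.mul_sum, ← EuclideanSpace.real_norm_sq_eq,
    div_mul_cancel₀ _ (pow_pos hr 2).ne']
  simp [hD]
end

section
/- Let d ≥ 4 be an even integer, M > 0, and set M̃ := 2M · exp(H_{d/2−2}/2 − γ), where H_n = Σ_{j=1}^n 1/j is the n-th harmonic number (H_0 = 0) and γ is the Euler–Mascheroni constant. Then for every Schwartz function f : ℝ^d → ℂ, ∫_{ℝ^d} ln(M|x|) · |x|^{2−d} · (∫_{ℝ^d} e^{i⟨x,k⟩} f(k) dk) dx = −(4π^{d/2}/Γ(d/2 − 1)) · ∫_{ℝ^d} |k|^{−2} · ln(|k|/M̃) · f(k) dk, and both integrals converge absolutely. -/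
/-!
The kernel is written as a superposition of Gaussians. With `n = d / 2 - 2`, differentiating Euler's
integral for `Γ` at `n + 1` gives, for `R > 0`,
`∫₀^∞ t ^ n (a + b log t) e^{-R t} dt = n! R^{-(n+1)} (a + b (-γ + H_n - log R))`
(`integral_weight`). Taking `R = |x|²`, `b = -1/2` and a suitable `a`, the right-hand side is
`n! log (M |x|) |x|^{2-d}`. Integrating against a Schwartz function and applying Fubini
(`log_subordination`) reduces the left-hand side of the theorem to integrals of `e^{-t|x|²}` against
the Fourier transform of `f`, which are integrals of `(π / t)^{d/2} e^{-|k|²/(4t)}` against `f`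
(`integral_gaussian_mul_fourier`). The substitution `u = 1 / (4 t)` absorbs the factor `t ^ (n - d/2)`,
which is `t⁻²`, into the measure and leaves a weight `a' + (log u) / 2` in `u`; so
`log_subordination` with `n = 0`, read backwards and applied to `f`, yields the kernel
`-|k|^{-2} log (|k| / M̃)`.

Absolute convergence in Fubini's theorem comes from `|log t| ≤ 2 (t^{1/2} + t^{-1/2})`: it bounds
the weight by two pure powers of `t`, whose Gaussian superpositions are the powers `|x|^{-(2n+3)}`
and `|x|^{-(2n+1)}`, integrable near the origin because `2 n + 3 < d`.
-/

open MeasureTheory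
open scoped RealInnerProductSpace

/-! ### Laplace transforms with a logarithm -/

/-- Euler's integral for `Γ` differentiated at a positive integer. -/
theorem gamma_log (n : ℕ) :
    ∫ t in Set.Ioi (0:ℝ), t ^ n * Real.log t * Real.exp (-t)
      = n.factorial * (-Real.eulerMascheroniConstant + harmonic n) := by
  have hre : 0 < ((n : ℂ) + 1).re := by
    simp; positivity
  have h1 := Complex.hasDerivAt_GammaIntegral hre
  have h2 := Complex.hasDerivAt_Gamma_nat n
  have h3 : Complex.Gamma =ᶠ[nhds ((n : ℂ) + 1)] Complex.GammaIntegral := by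
    have : {z : ℂ | 0 < z.re} ∈ nhds ((n : ℂ) + 1) :=
      (isOpen_lt continuous_const Complex.continuous_re).mem_nhds hre
    filter_upwards [this] with z hz using Complex.Gamma_eq_integral hz
  have h4 := h1.unique (h2.congr_of_eventuallyEq h3.symm)
  apply Complex.ofReal_injective
  rw [← integral_complex_ofReal]
  push_cast
  rw [← h4]
  refine setIntegral_congr_fun measurableSet_Ioi fun t ht => ?_
  simp [mul_assoc]

/-- Two-sided control of the logarithm by powers of `t`. The exponent `1/2` is small enough for the
resulting singularities at `x = 0` to be integrable in `log_subordination`. -/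
theorem abs_affine_log_le (a b : ℝ) {t : ℝ} (ht : 0 < t) :
    |a + b * Real.log t| ≤ (|a| + 2 * |b|) * (t ^ (1/2 : ℝ) + t ^ (-(1/2) : ℝ)) := by
  have h1 := Real.log_le_rpow_div ht.le (show (0:ℝ) < 1/2 by norm_num)
  have h2 := Real.log_le_rpow_div (inv_pos.2 ht).le (show (0:ℝ) < 1/2 by norm_num)
  rw [Real.log_inv, Real.inv_rpow ht.le, ← Real.rpow_neg ht.le] at h2
  have hp : 0 < t ^ (1/2 : ℝ) := by positivity
  have hq : t ^ (-(1/2) : ℝ) = (t ^ (1/2 : ℝ))⁻¹ := Real.rpow_neg ht.le _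
  have hq0 : 0 < t ^ (-(1/2) : ℝ) := by positivity
  have h3 : 1 ≤ t ^ (1/2 : ℝ) + t ^ (-(1/2) : ℝ) := by
    rcases le_total 1 (t ^ (1/2 : ℝ)) with h | h
    · linarith
    · have := (one_le_inv₀ hp).2 h
      linarith
  have h4 : |Real.log t| ≤ 2 * (t ^ (1/2 : ℝ) + t ^ (-(1/2) : ℝ)) := by
    rw [abs_le]; constructor <;> linarith
  calc |a + b * Real.log t| ≤ |a| + |b| * |Real.log t| := by
        rw [← abs_mul]; exact abs_add_le _ _
    _ ≤ |a| * (t ^ (1/2 : ℝ) + t ^ (-(1/2) : ℝ))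
        + |b| * (2 * (t ^ (1/2 : ℝ) + t ^ (-(1/2) : ℝ))) := by
        gcongr
        exact le_mul_of_one_le_right (abs_nonneg _) h3
    _ = _ := by ring

theorem integrableOn_rpow_mul_exp {p R : ℝ} (hp : 0 < p) (hR : 0 < R) :
    IntegrableOn (fun t : ℝ => t ^ (p - 1) * Real.exp (-(R * t))) (Set.Ioi 0) := by
  have := integrableOn_rpow_mul_exp_neg_mul_rpow (s := p - 1) (p := 1) (by linarith) one_pos hR
  simpa using this

/-- The weight of the Gaussian superposition is dominated by two pure powers of `t`. The exponents
are written as `p - 1` to match Euler's integral for `Γ p`. -/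
theorem weight_le (n : ℕ) (a b : ℝ) {t : ℝ} (ht : 0 < t) :
    |t ^ n * (a + b * Real.log t)| ≤ (|a| + 2 * |b|) *
      (t ^ ((n + 3/2 : ℝ) - 1) + t ^ ((n + 1/2 : ℝ) - 1)) := by
  have h := abs_affine_log_le a b ht
  rw [abs_mul, abs_of_pos (pow_pos ht n)]
  calc t ^ n * |a + b * Real.log t| ≤ t ^ n * ((|a| + 2 * |b|) *
        (t ^ (1/2 : ℝ) + t ^ (-(1/2) : ℝ))) := by gcongr
    _ = (|a| + 2 * |b|) * (t ^ (n : ℝ) * t ^ (1/2 : ℝ) + t ^ (n : ℝ) * t ^ (-(1/2) : ℝ)) := by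
      rw [Real.rpow_natCast]; ring
    _ = _ := by
      rw [← Real.rpow_add ht, ← Real.rpow_add ht]
      ring_nf

theorem integrableOn_weight (n : ℕ) (a b : ℝ) {R : ℝ} (hR : 0 < R) :
    IntegrableOn (fun t : ℝ => t ^ n * (a + b * Real.log t) * Real.exp (-(R * t)))
      (Set.Ioi 0) := by
  have h := ((integrableOn_rpow_mul_exp (p := n + 3/2) (by positivity) hR).add
    (integrableOn_rpow_mul_exp (p := n + 1/2) (by positivity) hR)).const_mul (|a| + 2 * |b|)
  refine Integrable.mono' h (by fun_prop) ?_
  filter_upwards [ae_restrict_mem measurableSet_Ioi] with t ht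
  rw [norm_mul, Real.norm_eq_abs, Real.norm_eq_abs, Real.abs_exp]
  calc _ ≤ _ := mul_le_mul_of_nonneg_right (weight_le n a b ht) (Real.exp_pos _).le
    _ = _ := by simp only [Pi.add_apply]; ring

/-- The logarithmic kernel `R ^ (-(n + 1)) * (const - b * log R)` as a Laplace transform, obtained
from `gamma_log` by rescaling `t`. -/
theorem integral_weight (n : ℕ) (a b : ℝ) {R : ℝ} (hR : 0 < R) :
    ∫ t in Set.Ioi (0:ℝ), t ^ n * (a + b * Real.log t) * Real.exp (-(R * t))
      = n.factorial * (R ^ (n + 1))⁻¹ *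
        (a + b * (-Real.eulerMascheroniConstant + harmonic n - Real.log R)) := by
  set G : ℝ → ℝ := fun u =>
    (R ^ n)⁻¹ * ((a - b * Real.log R) * (u ^ (((n:ℝ) + 1) - 1) * Real.exp (-(1 * u))) +
      b * (u ^ n * Real.log u * Real.exp (-u))) with hG
  have h0 : ∀ t ∈ Set.Ioi (0:ℝ), t ^ n * (a + b * Real.log t) * Real.exp (-(R * t))
      = G (R * t) := by
    intro t ht
    have ht' : (0:ℝ) < t := ht
    simp only [hG]
    rw [Real.log_mul hR.ne' ht'.ne', add_sub_cancel_right, Real.rpow_natCast, mul_pow]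
    field_simp
    ring
  rw [setIntegral_congr_fun measurableSet_Ioi h0, integral_comp_mul_left_Ioi G 0 hR, mul_zero, hG,
    integral_const_mul, integral_add, integral_const_mul, integral_const_mul, gamma_log,
    Real.integral_rpow_mul_exp_neg_mul_Ioi (by positivity) one_pos, Real.Gamma_nat_eq_factorial]
  · simp only [smul_eq_mul, div_one, Real.one_rpow]
    field_simp
    ring
  · exact (integrableOn_rpow_mul_exp (by positivity) one_pos).const_mul _
  · have := integrableOn_weight n 0 1 one_pos
    simp only [zero_add, one_mul] at this
    exact this.const_mul _

/-! ### Gaussian superpositions paired with Schwartz functions -/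

theorem schwartz_integrable_norm_rpow {d : ℕ} (hd : 1 ≤ d) {α : ℝ} (h0 : 0 ≤ α) (hα : α < d)
    (g : SchwartzMap (EuclideanSpace ℝ (Fin d)) ℂ) :
    Integrable (fun x : EuclideanSpace ℝ (Fin d) => ‖x‖ ^ (-α) * ‖g x‖) := by
  have hgc : Continuous g := g.continuous
  have hm : AEStronglyMeasurable (fun x : EuclideanSpace ℝ (Fin d) => ‖x‖ ^ (-α) * ‖g x‖) := by
    apply Measurable.aestronglyMeasurable
    have := hgc.measurable
    fun_prop
  obtain ⟨C, -, hC⟩ := g.decay 0 0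
  simp only [pow_zero, norm_iteratedFDeriv_zero, one_mul] at hC
  -- Near the origin `g` is bounded; away from it the power is at most `1`.
  rw [← integrableOn_univ, ← Set.union_compl_self (Metric.ball 0 1), integrableOn_union]
  constructor
  · refine integrableOn_ball_of_norm_le_rpow (C := C) (α := α) (by simpa using hd)
      (by simpa using hα) (ae_of_all _ fun x => ?_) hm
    have : 0 ≤ ‖x‖ ^ (-α) := by positivity
    rw [norm_mul, norm_norm, Real.norm_of_nonneg this, mul_comm]
    gcongr
    exact hC x
  · refine Integrable.mono' (g.integrable.norm.integrableOn) hm.restrict ?_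
    filter_upwards [ae_restrict_mem Metric.isOpen_ball.measurableSet.compl] with x hx
    have h1 : 1 ≤ ‖x‖ := by simpa using hx
    have : 0 ≤ ‖x‖ ^ (-α) := by positivity
    rw [norm_mul, norm_norm, Real.norm_of_nonneg this]
    exact mul_le_of_le_one_left (norm_nonneg _)
      (Real.rpow_le_one_of_one_le_of_nonpos h1 (by linarith))

/-- Absolute convergence of the Gaussian superposition of the power `‖x‖ ^ (-2 * p)` against a
Schwartz function. -/
theorem integrable_power_kernel {d : ℕ} (hd : 1 ≤ d) {p : ℝ} (hp : 0 < p) (hpd : 2 * p < d)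
    (g : SchwartzMap (EuclideanSpace ℝ (Fin d)) ℂ) :
    Integrable (fun z : ℝ × EuclideanSpace ℝ (Fin d) =>
      z.1 ^ (p - 1) * Real.exp (-(‖z.2‖ ^ 2 * z.1)) * ‖g z.2‖)
      ((volume.restrict (Set.Ioi 0)).prod volume) := by
  have : NeZero d := ⟨by omega⟩
  have hgm : Measurable g := g.continuous.measurable
  have hne : ∀ᵐ x : EuclideanSpace ℝ (Fin d), x ≠ 0 := by simp [ae_iff]
  rw [integrable_prod_iff' (Measurable.aestronglyMeasurable (by fun_prop))]
  constructor
  · filter_upwards [hne] with x hx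
    exact (integrableOn_rpow_mul_exp hp (by positivity)).mul_const _
  · refine ((schwartz_integrable_norm_rpow hd (by positivity) hpd g).const_mul
      (Real.Gamma p)).congr ?_
    filter_upwards [hne] with x hx
    have hx' : 0 < ‖x‖ := norm_pos_iff.2 hx
    have : ∀ t ∈ Set.Ioi (0:ℝ), ‖t ^ (p - 1) * Real.exp (-(‖x‖ ^ 2 * t)) * ‖g x‖‖ =
        t ^ (p - 1) * Real.exp (-(‖x‖ ^ 2 * t)) * ‖g x‖ := by
      intro t ht
      have ht' : (0:ℝ) < t := ht
      exact Real.norm_of_nonneg (by positivity)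
    rw [setIntegral_congr_fun measurableSet_Ioi this, integral_mul_const,
      Real.integral_rpow_mul_exp_neg_mul_Ioi hp (by positivity), one_div,
      Real.inv_rpow (by positivity), ← Real.rpow_natCast, ← Real.rpow_mul hx'.le,
      ← Real.rpow_neg hx'.le]
    push_cast
    ring_nf

/-- The integrability needed to apply Fubini in `log_subordination`. -/
theorem integrable_log_kernel {d : ℕ} (n : ℕ) (hn : 2 * n + 3 < d) (a b : ℝ)
    (g : SchwartzMap (EuclideanSpace ℝ (Fin d)) ℂ) :
    Integrable (fun z : ℝ × EuclideanSpace ℝ (Fin d) =>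
      (z.1 ^ n * (a + b * Real.log z.1) * Real.exp (-(‖z.2‖ ^ 2 * z.1))) • g z.2)
      ((volume.restrict (Set.Ioi 0)).prod volume) := by
  have hgm : Measurable g := g.continuous.measurable
  have hn' : 2 * (n : ℝ) + 3 < d := by exact_mod_cast hn
  have h := ((integrable_power_kernel (p := n + 3/2) (by omega) (by positivity) (by linarith)
    g).add (integrable_power_kernel (p := n + 1/2) (by omega) (by positivity) (by linarith)
    g)).const_mul (|a| + 2 * |b|)
  refine Integrable.mono' h (Measurable.aestronglyMeasurable (by fun_prop)) ?_
  have hpos : ∀ᵐ z ∂((volume.restrict (Set.Ioi (0:ℝ))).prod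
      (volume : Measure (EuclideanSpace ℝ (Fin d)))), 0 < z.1 :=
    Measure.quasiMeasurePreserving_fst.ae (ae_restrict_mem measurableSet_Ioi)
  filter_upwards [hpos] with z hz
  rw [norm_smul, norm_mul, Real.norm_eq_abs, Real.norm_eq_abs, Real.abs_exp]
  calc _ ≤ _ := mul_le_mul_of_nonneg_right (mul_le_mul_of_nonneg_right (weight_le n a b hz)
        (Real.exp_pos _).le) (norm_nonneg _)
    _ = _ := by simp only [Pi.add_apply]; ring

/-- Pairing a Schwartz function with a logarithmic kernel amounts to pairing it with Gaussians and
then integrating over the Gaussian parameter. The kernel takes a junk value at `x = 0`, a null set. -/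
theorem log_subordination {d : ℕ} (n : ℕ) (hn : 2 * n + 3 < d) (a b : ℝ)
    (g : SchwartzMap (EuclideanSpace ℝ (Fin d)) ℂ) :
    Integrable (fun x : EuclideanSpace ℝ (Fin d) =>
      (n.factorial * ((‖x‖ ^ 2) ^ (n + 1))⁻¹ *
        (a + b * (-Real.eulerMascheroniConstant + harmonic n - Real.log (‖x‖ ^ 2)))) • g x)
    ∧ ∫ x : EuclideanSpace ℝ (Fin d),
      (n.factorial * ((‖x‖ ^ 2) ^ (n + 1))⁻¹ *
        (a + b * (-Real.eulerMascheroniConstant + harmonic n - Real.log (‖x‖ ^ 2)))) • g x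
      = ∫ t in Set.Ioi (0:ℝ), (t ^ n * (a + b * Real.log t)) •
          ∫ x : EuclideanSpace ℝ (Fin d), Real.exp (-(‖x‖ ^ 2 * t)) • g x := by
  have : NeZero d := ⟨by omega⟩
  have hne : ∀ᵐ x : EuclideanSpace ℝ (Fin d), x ≠ 0 := by simp [ae_iff]
  have hI := integrable_log_kernel n hn a b g
  have hin : (fun x : EuclideanSpace ℝ (Fin d) => ∫ t in Set.Ioi (0:ℝ),
      (t ^ n * (a + b * Real.log t) * Real.exp (-(‖x‖ ^ 2 * t))) • g x) =ᵐ[volume] fun x =>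
      (n.factorial * ((‖x‖ ^ 2) ^ (n + 1))⁻¹ *
        (a + b * (-Real.eulerMascheroniConstant + harmonic n - Real.log (‖x‖ ^ 2)))) • g x := by
    filter_upwards [hne] with x hx
    rw [integral_smul_const, integral_weight n a b (by positivity)]
  refine ⟨hI.integral_prod_right.congr hin, ?_⟩
  rw [← integral_congr_ae hin, ← integral_integral_swap (f := fun (t : ℝ)
    (x : EuclideanSpace ℝ (Fin d)) =>
      (t ^ n * (a + b * Real.log t) * Real.exp (-(‖x‖ ^ 2 * t))) • g x) hI]
  simp only [mul_smul, integral_smul]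

/-! ### Fourier transform and Gaussians -/

/-- The Fourier transform with character `exp (i ⟪x, k⟫)` is again a Schwartz function: it is
Mathlib's inverse Fourier transform composed with the dilation by `1 / (2π)`. -/
theorem exists_schwartz_fourier {d : ℕ} (f : SchwartzMap (EuclideanSpace ℝ (Fin d)) ℂ) :
    ∃ F : SchwartzMap (EuclideanSpace ℝ (Fin d)) ℂ, ∀ x, F x =
      ∫ k : EuclideanSpace ℝ (Fin d), Complex.exp (Complex.I * ((⟪x, k⟫ : ℝ) : ℂ)) * f k := by
  have hc : (2 * Real.pi)⁻¹ ≠ 0 := by positivity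
  refine ⟨SchwartzMap.compCLMOfContinuousLinearEquiv ℂ
    (LinearEquiv.smulOfNeZero ℝ (EuclideanSpace ℝ (Fin d)) _ hc).toContinuousLinearEquiv
    (FourierTransformInv.fourierInv f), fun x => ?_⟩
  simp only [SchwartzMap.compCLMOfContinuousLinearEquiv_apply, Function.comp_apply,
    SchwartzMap.fourierInv_coe, Real.fourierInv_eq']
  congr 1
  ext k
  simp only [LinearEquiv.coe_toContinuousLinearEquiv', LinearEquiv.smulOfNeZero_apply,
    inner_smul_right, smul_eq_mul]
  rw [mul_inv_cancel_left₀ (by positivity), real_inner_comm, mul_comm Complex.I]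

/-- Parseval's formula for a Gaussian against the Fourier transform of `f`. -/
theorem integral_gaussian_mul_fourier {d : ℕ} {t : ℝ} (ht : 0 < t)
    (f : SchwartzMap (EuclideanSpace ℝ (Fin d)) ℂ) :
    ∫ x : EuclideanSpace ℝ (Fin d), Real.exp (-(‖x‖ ^ 2 * t)) •
      ∫ k : EuclideanSpace ℝ (Fin d), Complex.exp (Complex.I * ((⟪x, k⟫ : ℝ) : ℂ)) * f k
    = ((Real.pi / t) ^ ((d : ℝ) / 2) : ℝ) •
      ∫ k : EuclideanSpace ℝ (Fin d), Real.exp (-(‖k‖ ^ 2 * (t⁻¹ / 4))) • f k := by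
  have ht' : 0 < (t : ℂ).re := by simpa using ht
  have hg : Integrable (fun x : EuclideanSpace ℝ (Fin d) =>
      Complex.exp (-(t:ℂ) * ‖x‖ ^ 2)) := by
    simpa using GaussianFourier.integrable_cexp_neg_mul_sq_norm_add ht' 0
      (0 : EuclideanSpace ℝ (Fin d))
  have hI : Integrable (Function.uncurry fun (x k : EuclideanSpace ℝ (Fin d)) =>
      Complex.exp (Complex.I * ((⟪x, k⟫ : ℝ) : ℂ)) * (Complex.exp (-(t:ℂ) * ‖x‖ ^ 2) * f k))
      (volume.prod volume) := by
    refine (hg.mul_prod f.integrable).bdd_mul (c := 1)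
      (Continuous.aestronglyMeasurable (by fun_prop)) (ae_of_all _ fun z => ?_)
    rw [mul_comm Complex.I, Complex.norm_exp_ofReal_mul_I]
  calc _ = ∫ x : EuclideanSpace ℝ (Fin d), ∫ k : EuclideanSpace ℝ (Fin d),
        Complex.exp (Complex.I * ((⟪x, k⟫ : ℝ) : ℂ)) *
          (Complex.exp (-(t:ℂ) * ‖x‖ ^ 2) * f k) := by
        congr 1
        ext x
        rw [← integral_smul]
        congr 1
        ext k
        rw [Complex.real_smul]
        push_cast
        rw [mul_comm (_ ^ 2) (t : ℂ), neg_mul]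
        ring
    _ = ∫ k : EuclideanSpace ℝ (Fin d), ∫ x : EuclideanSpace ℝ (Fin d),
        Complex.exp (Complex.I * ((⟪x, k⟫ : ℝ) : ℂ)) *
          (Complex.exp (-(t:ℂ) * ‖x‖ ^ 2) * f k) := integral_integral_swap hI
    _ = _ := by
        rw [← integral_smul]
        congr 1
        ext k
        have h1 : ∀ x : EuclideanSpace ℝ (Fin d), Complex.exp (Complex.I * ((⟪x, k⟫ : ℝ) : ℂ)) *
            (Complex.exp (-(t:ℂ) * ‖x‖ ^ 2) * f k) =
            Complex.exp (-(t:ℂ) * ‖x‖ ^ 2 + Complex.I * ((⟪k, x⟫ : ℝ) : ℂ)) * f k := by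
          intro x
          rw [Complex.exp_add, real_inner_comm]; ring
        simp_rw [h1]
        rw [integral_mul_const, GaussianFourier.integral_cexp_neg_mul_sq_norm_add ht',
          smul_smul, Complex.real_smul]
        congr 1
        push_cast
        rw [Complex.ofReal_cpow (by positivity)]
        congr 1
        · simp
        · congr 1
          rw [Complex.I_sq]
          field_simp

/-! ### The Fourier transform of the logarithmic kernel -/

/- STATEMENT 13: the distributional Fourier transform of the logarithmic kernel
ln(M|x|)/|x|^{d−2} in even dimension d ≥ 4, paired with a Schwartz function:
∫ ln(M|x|)|x|^{2−d} (∫ e^{i⟨x,k⟩} f(k) dk) dx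
  = −(4π^{d/2}/Γ(d/2−1)) ∫ |k|^{−2} ln(|k|/M̃) f(k) dk,
where M̃ = 2M exp(H_{d/2−2}/2 − γ). -/
theorem stmt_13 (d : ℕ) (hd : 4 ≤ d) (hde : Even d) (M : ℝ) (hM : 0 < M)
    (H : ℝ) (hH : H = ∑ j ∈ Finset.range (d / 2 - 2), (1 : ℝ) / (j + 1))
    (Mt : ℝ) (hMt : Mt = 2 * M * Real.exp (H / 2 - Real.eulerMascheroniConstant))
    (f : SchwartzMap (EuclideanSpace ℝ (Fin d)) ℂ) :
    Integrable (fun x : EuclideanSpace ℝ (Fin d) =>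
      ((Real.log (M * ‖x‖) * ‖x‖ ^ ((2 : ℝ) - d)) : ℝ) •
        ∫ k : EuclideanSpace ℝ (Fin d),
          Complex.exp (Complex.I * ((⟪x, k⟫ : ℝ) : ℂ)) * f k)
    ∧ Integrable (fun k : EuclideanSpace ℝ (Fin d) =>
        ((‖k‖ ^ (-(2 : ℝ)) * Real.log (‖k‖ / Mt)) : ℝ) • f k)
    ∧ (∫ x : EuclideanSpace ℝ (Fin d),
        ((Real.log (M * ‖x‖) * ‖x‖ ^ ((2 : ℝ) - d)) : ℝ) •
          ∫ k : EuclideanSpace ℝ (Fin d),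
            Complex.exp (Complex.I * ((⟪x, k⟫ : ℝ) : ℂ)) * f k)
      = ((-(4 * Real.pi ^ ((d : ℝ) / 2) / Real.Gamma ((d : ℝ) / 2 - 1))) : ℝ)
          • ∫ k : EuclideanSpace ℝ (Fin d),
              ((‖k‖ ^ (-(2 : ℝ)) * Real.log (‖k‖ / Mt)) : ℝ) • f k := by
  obtain ⟨F, hF⟩ := exists_schwartz_fourier f
  have : NeZero d := ⟨by omega⟩
  have hne : ∀ᵐ x : EuclideanSpace ℝ (Fin d), x ≠ 0 := by simp [ae_iff]
  obtain ⟨m, rfl⟩ := hde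
  obtain ⟨n, rfl⟩ : ∃ n, m = n + 2 := ⟨m - 2, by omega⟩
  have hH' : H = harmonic n := by
    rw [hH, show (n + 2 + (n + 2)) / 2 - 2 = n by omega, harmonic]
    push_cast
    simp only [one_div]
  have hMt0 : 0 < Mt := by rw [hMt]; positivity
  have hlogMt : Real.log Mt = Real.log 2 + Real.log M + H / 2 -
      Real.eulerMascheroniConstant := by
    rw [hMt, Real.log_mul (by positivity) (Real.exp_pos _).ne', Real.log_mul two_ne_zero hM.ne',
      Real.log_exp]
    ring
  have hfac : (n.factorial : ℝ) ≠ 0 := by positivity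
  -- The constant `a` makes the subordination integral of `F` produce exactly `log (M * ‖x‖)`.
  set a : ℝ := Real.log M - Real.eulerMascheroniConstant / 2 + H / 2 with ha
  obtain ⟨hFi, hFe⟩ := log_subordination n (by omega) a (-(1/2)) F
  obtain ⟨hfi, hfe⟩ := log_subordination 0 (by omega) (a + Real.log 2) (1/2) f
  have hxF : ∀ᵐ x : EuclideanSpace ℝ (Fin (n + 2 + (n + 2))),
      (n.factorial * ((‖x‖ ^ 2) ^ (n + 1))⁻¹ *
        (a + -(1/2) * (-Real.eulerMascheroniConstant + harmonic n - Real.log (‖x‖ ^ 2)))) • F x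
      = (n.factorial : ℝ) • ((Real.log (M * ‖x‖) *
          ‖x‖ ^ ((2 : ℝ) - (n + 2 + (n + 2) : ℕ)) : ℝ) • F x) := by
    filter_upwards [hne] with x hx
    have hx' : 0 < ‖x‖ := norm_pos_iff.2 hx
    rw [smul_smul]
    congr 1
    rw [Real.log_pow, Real.log_mul hM.ne' hx'.ne', ha, hH', ← pow_mul,
      show (2 : ℝ) - (n + 2 + (n + 2) : ℕ) = -((2 * (n + 1) : ℕ) : ℝ) by push_cast; ring,
      Real.rpow_neg hx'.le, Real.rpow_natCast]
    push_cast
    ring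
  have hxf : ∀ᵐ k : EuclideanSpace ℝ (Fin (n + 2 + (n + 2))),
      ((Nat.factorial 0 : ℕ) * ((‖k‖ ^ 2) ^ (0 + 1))⁻¹ * (a + Real.log 2 + 1/2 *
        (-Real.eulerMascheroniConstant + harmonic 0 - Real.log (‖k‖ ^ 2)))) • f k
      = (-1 : ℝ) • ((‖k‖ ^ (-(2 : ℝ)) * Real.log (‖k‖ / Mt) : ℝ) • f k) := by
    filter_upwards [hne] with k hk
    have hk' : 0 < ‖k‖ := norm_pos_iff.2 hk
    rw [smul_smul]
    congr 1
    rw [Real.log_pow, Real.log_div hk'.ne' hMt0.ne', ha, hlogMt, Real.rpow_neg hk'.le,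
      Real.rpow_two]
    simp
    ring
  rw [integral_congr_ae hxF, integral_smul] at hFe
  rw [integral_congr_ae hxf, integral_smul] at hfe
  have hFi' := (integrable_smul_iff (c := (n.factorial : ℝ)) hfac _).1 (hFi.congr hxF)
  have hfi' := (integrable_smul_iff (c := (-1 : ℝ)) (by norm_num) _).1 (hfi.congr hxf)
  simp_rw [← hF]
  refine ⟨hFi', hfi', ?_⟩
  -- The substitution `u = 1 / (4 t)` turns the Gaussian integral over `t` into the one over `u`.
  set Φ : ℝ → ℂ := fun u => (u ^ 0 * (a + Real.log 2 + 1/2 * Real.log u)) •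
    ∫ k : EuclideanSpace ℝ (Fin (n + 2 + (n + 2))), Real.exp (-(‖k‖ ^ 2 * u)) • f k with hΦ
  have hsub : ∀ t ∈ Set.Ioi (0:ℝ), (t ^ n * (a + -(1/2) * Real.log t)) •
      ∫ x : EuclideanSpace ℝ (Fin (n + 2 + (n + 2))), Real.exp (-(‖x‖ ^ 2 * t)) • F x
      = (Real.pi ^ (n + 2)) • ((|(-1 : ℝ)| * t ^ ((-1 : ℝ) - 1)) •
          (fun v => Φ (1/4 * v)) (t ^ (-1 : ℝ))) := by
    intro t ht
    have ht' : (0:ℝ) < t := ht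
    simp_rw [hF]
    rw [integral_gaussian_mul_fourier ht' f]
    simp only [hΦ]
    rw [show ((n + 2 + (n + 2) : ℕ) : ℝ) / 2 = ((n + 2 : ℕ) : ℝ) by push_cast; ring,
      Real.rpow_natCast, Real.rpow_neg_one, show (-1 : ℝ) - 1 = -((2 : ℕ) : ℝ) by norm_num,
      Real.rpow_neg ht'.le, Real.rpow_natCast, Real.log_mul (by norm_num) (by positivity),
      Real.log_inv, show Real.log (1/4) = -(2 * Real.log 2) by
        rw [one_div, Real.log_inv, show (4:ℝ) = 2 ^ 2 by norm_num, Real.log_pow]; norm_num,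
      show t⁻¹ / 4 = 1/4 * t⁻¹ by ring, smul_smul, smul_smul, smul_smul]
    congr 1
    rw [div_pow, abs_neg, abs_one]
    field_simp
    ring
  rw [setIntegral_congr_fun measurableSet_Ioi hsub, integral_smul,
    integral_comp_rpow_Ioi (fun v => Φ (1/4 * v)) (by norm_num),
    integral_comp_mul_left_Ioi Φ 0 (by norm_num), mul_zero, ← hfe] at hFe
  rw [← inv_smul_smul₀ hfac (∫ x, _), hFe, smul_smul, smul_smul, smul_smul]
  congr 1
  rw [show ((n + 2 + (n + 2) : ℕ) : ℝ) / 2 = ((n + 2 : ℕ) : ℝ) by push_cast; ring,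
    Real.rpow_natCast, show ((n + 2 : ℕ) : ℝ) - 1 = n + 1 by push_cast; ring,
    Real.Gamma_nat_eq_factorial]
  field_simp
end

section
/- Let d ≥ 2 be an integer and z ∈ ℝ^d with z ≠ 0. Define I_{mn} := δ_{mn} − 2 z_m z_n/|z|², the tensor T_{ij,k|mn,l} := δ_{ij}δ_{mn}I_{kl} − (1/2)δ_{mn}(δ_{ik}I_{jl} + δ_{jk}I_{il}) − (1/2)δ_{ij}δ_{ml}I_{kn} + (1/4)δ_{ml}(δ_{ik}I_{jn} + δ_{jk}I_{in}) − (1/2)δ_{ij}δ_{nl}I_{km} + (1/4)δ_{nl}(δ_{ik}I_{jm} + δ_{jk}I_{im}), and the projector Π_{ij,k|mn,l} := (I_{im}I_{jn} + I_{in}I_{jm})I_{kl} − (1/2)(I_{im}I_{kn} + I_{in}I_{km})I_{jl} − (1/2)(I_{jm}I_{kn} + I_{jn}I_{km})I_{il} − (2/(d−1)) T_{ij,k|mn,l}. Then for any two real traceless hook tensors a_{ij,k} and b_{mn,l} on ℝ^d (symmetric in their first two indices, satisfying the cyclic identity, with all Kronecker traces vanishing): Σ a_{ij,k} Π_{ij,k|mn,l}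 b_{mn,l} = 3·[ Σ a_{ij,k} b_{ij,k} − 4 Σ a_{mi,j} b_{ni,j} z_m z_n/|z|² − 2 Σ a_{ij,k} b_{ij,m} z_k z_m/|z|² + 6 Σ a_{ij,k} b_{mn,k} z_i z_j z_m z_n/|z|⁴ ], where all sums run over repeated indices from 1 to d. -/
/-!
Put `c = 1 / |z|²`, so that `I = 1 - 2 c z zᵀ`, and let `C = (I ⊗ I ⊗ I) b`.

* Every summand of `T` carries a delta with two indices among `m, n, l`, so contracting `T` with
  `b` produces a trace of `b`, which is zero (`sum_pair_delta_eq_zero`).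
* The remaining part of `Π` sends `b` to `2 C_{ij,k} - C_{ik,j} - C_{jk,i}`. Since `C` is again a
  hook tensor, this is `3 C_{ij,k}`.
* Expanding the product of the three factors `I` (`reflect_eq`), the term cubic in `c` contains
  `b(z, z, z)`, which is zero by cyclicity. In the quadratic term, write `D_k = b(z, z, k)`;
  cyclicity gives `b(z, k, z) = -D_k / 2` (`slot₁_slot₃`). Pairing with `a`, which has the same
  property, the three ways to choose two slots contribute `4 c² (1 + 1/4 + 1/4) D_a · D_b`,
  whence the coefficient `6` (`pairing_reflect`).

The normalisation of `c` plays no role, so the auxiliary lemmas hold for every real `c`.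
-/

section HookAux

variable {ι : Type*} [Fintype ι]

/-- Contraction of the vector `z` with the first slot of a three-index tensor. -/
def slot₁ (z : ι → ℝ) (b : ι → ι → ι → ℝ) (j k : ι) : ℝ := ∑ m, z m * b m j k

/-- Contraction of the vector `z` with the third slot of a three-index tensor. -/
def slot₃ (z : ι → ℝ) (b : ι → ι → ι → ℝ) (i j : ι) : ℝ := ∑ l, z l * b i j l

/-- Contraction of the vector `z` with the first two slots of a three-index tensor. -/
def slot₁₂ (z : ι → ℝ) (b : ι → ι → ι → ℝ) (k : ι) : ℝ := ∑ m, z m * slot₁ z b m k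

/-- The closed form of `(1 - 2 c z zᵀ)^{⊗3} b` for a hook tensor `b`; see `reflect_eq`. -/
noncomputable def reflect (c : ℝ) (z : ι → ℝ) (b : ι → ι → ι → ℝ) (i j k : ι) : ℝ :=
  b i j k - 2 * c * (z i * slot₁ z b j k + z j * slot₁ z b i k + z k * slot₃ z b i j)
    + 4 * c ^ 2 * (z i * z j * slot₁₂ z b k
      - z i * z k * slot₁₂ z b j / 2 - z j * z k * slot₁₂ z b i / 2)

lemma slot₁_add_slot₃ (z : ι → ℝ) (b : ι → ι → ι → ℝ)
    (hbs : ∀ i j k, b i j k = b j i k)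
    (hbc : ∀ i j k, b i j k + b i k j + b k j i = 0) (i j : ι) :
    slot₁ z b i j + slot₁ z b j i + slot₃ z b i j = 0 := by
  simp only [slot₁, slot₃, ← Finset.sum_add_distrib]
  refine Finset.sum_eq_zero fun m _ => ?_
  have h := hbc m i j
  rw [hbs j i m] at h
  linear_combination z m * h

lemma slot₃_symm (z : ι → ℝ) (b : ι → ι → ι → ℝ)
    (hbs : ∀ i j k, b i j k = b j i k) (i j : ι) :
    slot₃ z b i j = slot₃ z b j i := by
  simp only [slot₃, hbs i j]

lemma slot₁_slot₃_swap (z : ι → ℝ) (b : ι → ι → ι → ℝ) (j : ι) :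
    ∑ k, z k * slot₁ z b j k = ∑ i, z i * slot₃ z b i j := by
  simp only [slot₁, slot₃, Finset.mul_sum]
  rw [Finset.sum_comm]
  exact Finset.sum_congr rfl fun i _ => Finset.sum_congr rfl fun k _ => by ring

/-- Cyclicity reads `2 b(z, j, z) + b(z, z, j) = 0`. -/
lemma slot₁_slot₃ (z : ι → ℝ) (b : ι → ι → ι → ℝ)
    (hbs : ∀ i j k, b i j k = b j i k)
    (hbc : ∀ i j k, b i j k + b i k j + b k j i = 0) (j : ι) :
    ∑ i, z i * slot₃ z b i j = - slot₁₂ z b j / 2 := by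
  have h : ∑ i, z i * (slot₁ z b i j + slot₁ z b j i + slot₃ z b i j) = 0 :=
    Finset.sum_eq_zero fun i _ => by rw [slot₁_add_slot₃ z b hbs hbc, mul_zero]
  simp only [mul_add, Finset.sum_add_distrib] at h
  rw [slot₁_slot₃_swap z b] at h
  rw [slot₁₂]
  linarith

/-- Cyclicity forces `b(z, z, z) = 0`. -/
lemma slot₁₂_self (z : ι → ℝ) (b : ι → ι → ι → ℝ)
    (hbs : ∀ i j k, b i j k = b j i k)
    (hbc : ∀ i j k, b i j k + b i k j + b k j i = 0) :
    ∑ k, z k * slot₁₂ z b k = 0 := by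
  have h : ∑ k, z k * slot₁₂ z b k = ∑ k, z k * (∑ i, z i * slot₁ z b k i) := by
    simp only [slot₁₂, Finset.mul_sum]
    rw [Finset.sum_comm]
    exact Finset.sum_congr rfl fun i _ => Finset.sum_congr rfl fun k _ => by ring
  have h' : ∑ k, z k * (∑ i, z i * slot₁ z b k i) = ∑ k, (-1 / 2) * (z k * slot₁₂ z b k) :=
    Finset.sum_congr rfl fun k _ => by
      rw [slot₁_slot₃_swap z b, slot₁_slot₃ z b hbs hbc]; ring
  rw [← Finset.mul_sum] at h'
  linarith

lemma sum_reflection [DecidableEq ι] (c : ℝ) (z f : ι → ℝ) (i : ι) :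
    ∑ m, ((if i = m then (1 : ℝ) else 0) - 2 * c * z i * z m) * f m
      = f i - 2 * c * z i * ∑ m, z m * f m := by
  simp only [sub_mul, Finset.sum_sub_distrib, ite_mul, one_mul, zero_mul, Finset.sum_ite_eq,
    Finset.mem_univ, if_true, Finset.mul_sum]
  congr 1
  exact Finset.sum_congr rfl fun m _ => by ring

/-- Applying `I = 1 - 2 c z zᵀ` to all three slots of a hook tensor. -/
lemma reflect_eq [DecidableEq ι] (c : ℝ) (z : ι → ℝ) (I : ι → ι → ℝ)
    (hI : ∀ m n, I m n = (if m = n then (1 : ℝ) else 0) - 2 * c * z m * z n)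
    (b : ι → ι → ι → ℝ) (hbs : ∀ i j k, b i j k = b j i k)
    (hbc : ∀ i j k, b i j k + b i k j + b k j i = 0) (i j k : ι) :
    ∑ m, ∑ n, ∑ l, I i m * I j n * I k l * b m n l = reflect c z b i j k := by
  have hR : ∀ (f : ι → ℝ) (i : ι), ∑ m, I i m * f m = f i - 2 * c * z i * ∑ m, z m * f m := by
    intro f i
    simp only [hI]
    exact sum_reflection c z f i
  have h3 : ∀ m n, ∑ l, I k l * b m n l = b m n k - 2 * c * z k * slot₃ z b m n :=
    fun m n => hR (b m n) k
  have h2 : ∀ m, ∑ n, I j n * (b m n k - 2 * c * z k * slot₃ z b m n)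
      = b m j k - 2 * c * z k * slot₃ z b m j
        - 2 * c * z j * (slot₁ z b m k + c * z k * slot₁₂ z b m) := by
    intro m
    rw [hR]
    congr 2
    have e : ∑ n, z n * slot₃ z b m n = - slot₁₂ z b m / 2 := by
      rw [← slot₁_slot₃ z b hbs hbc]
      exact Finset.sum_congr rfl fun n _ => by rw [slot₃_symm z b hbs]
    have e' : ∑ n, z n * b m n k = slot₁ z b m k :=
      Finset.sum_congr rfl fun n _ => by rw [hbs]
    calc _ = ∑ n, z n * b m n k - 2 * c * z k * ∑ n, z n * slot₃ z b m n := by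
            rw [Finset.mul_sum, ← Finset.sum_sub_distrib]
            exact Finset.sum_congr rfl fun n _ => by ring
      _ = _ := by rw [e, e']; ring
  calc _ = ∑ m, I i m * ∑ n, I j n * ∑ l, I k l * b m n l := by
        simp only [Finset.mul_sum]
        exact Finset.sum_congr rfl fun m _ => Finset.sum_congr rfl fun n _ =>
          Finset.sum_congr rfl fun l _ => by ring
    _ = _ := by
        simp only [h3, h2]
        rw [hR]
        have e : ∑ m, z m * (b m j k - 2 * c * z k * slot₃ z b m j
            - 2 * c * z j * (slot₁ z b m k + c * z k * slot₁₂ z b m))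
            = slot₁ z b j k - 2 * c * z k * (∑ m, z m * slot₃ z b m j)
              - 2 * c * z j * (slot₁₂ z b k + c * z k * ∑ m, z m * slot₁₂ z b m) := by
          have d₁ : slot₁ z b j k = ∑ m, z m * b m j k := rfl
          have d₂ : slot₁₂ z b k = ∑ m, z m * slot₁ z b m k := rfl
          rw [d₁, d₂, Finset.mul_sum, Finset.mul_sum, ← Finset.sum_add_distrib, Finset.mul_sum,
            ← Finset.sum_sub_distrib, ← Finset.sum_sub_distrib]
          exact Finset.sum_congr rfl fun n _ => by ring
        rw [e, slot₁_slot₃ z b hbs hbc, slot₁₂_self z b hbs hbc, reflect]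
        ring

lemma reflect_symm (c : ℝ) (z : ι → ℝ) (b : ι → ι → ι → ℝ)
    (hbs : ∀ i j k, b i j k = b j i k) (i j k : ι) :
    reflect c z b i j k = reflect c z b j i k := by
  simp only [reflect, hbs i j k, slot₃_symm z b hbs i j]
  ring

lemma reflect_cyclic (c : ℝ) (z : ι → ℝ) (b : ι → ι → ι → ℝ)
    (hbs : ∀ i j k, b i j k = b j i k)
    (hbc : ∀ i j k, b i j k + b i k j + b k j i = 0) (i j k : ι) :
    reflect c z b i j k + reflect c z b i k j + reflect c z b k j i = 0 := by
  have h1 := slot₁_add_slot₃ z b hbs hbc i j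
  have h2 := slot₁_add_slot₃ z b hbs hbc i k
  have h3 := slot₁_add_slot₃ z b hbs hbc k j
  simp only [reflect]
  linear_combination hbc i j k - 2 * c * (z k * h1 + z j * h2 + z i * h3)

/-- The pairing of `a` with `(1 - 2 c z zᵀ)^{⊗3} b`, for hook tensors `a` and `b`. -/
lemma pairing_reflect (c : ℝ) (z : ι → ℝ) (a b : ι → ι → ι → ℝ)
    (has : ∀ i j k, a i j k = a j i k)
    (hac : ∀ i j k, a i j k + a i k j + a k j i = 0) :
    ∑ i, ∑ j, ∑ k, a i j k * reflect c z b i j k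
      = (∑ i, ∑ j, ∑ k, a i j k * b i j k)
        - 4 * c * (∑ i, ∑ j, slot₁ z a i j * slot₁ z b i j)
        - 2 * c * (∑ i, ∑ j, slot₃ z a i j * slot₃ z b i j)
        + 6 * c ^ 2 * ∑ k, slot₁₂ z a k * slot₁₂ z b k := by
  have P1 : ∀ g : ι → ι → ℝ, ∑ i, ∑ j, ∑ k, a i j k * (z i * g j k)
      = ∑ j, ∑ k, slot₁ z a j k * g j k := by
    intro g
    simp only [slot₁, Finset.sum_mul]
    rw [Finset.sum_comm]
    refine Finset.sum_congr rfl fun j _ => ?_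
    rw [Finset.sum_comm]
    exact Finset.sum_congr rfl fun k _ => Finset.sum_congr rfl fun i _ => by ring
  have P2 : ∀ g : ι → ι → ℝ, ∑ i, ∑ j, ∑ k, a i j k * (z j * g i k)
      = ∑ j, ∑ k, slot₁ z a j k * g j k := by
    intro g
    rw [← P1, Finset.sum_comm]
    exact Finset.sum_congr rfl fun j _ => Finset.sum_congr rfl fun i _ =>
      Finset.sum_congr rfl fun k _ => by rw [has]
  have P3 : ∀ g : ι → ι → ℝ, ∑ i, ∑ j, ∑ k, a i j k * (z k * g i j)
      = ∑ i, ∑ j, slot₃ z a i j * g i j := by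
    intro g
    simp only [slot₃, Finset.sum_mul]
    exact Finset.sum_congr rfl fun j _ => Finset.sum_congr rfl fun i _ =>
      Finset.sum_congr rfl fun k _ => by ring
  have P12 : ∀ g : ι → ℝ, ∑ j, ∑ k, slot₁ z a j k * (z j * g k)
      = ∑ k, slot₁₂ z a k * g k := by
    intro g
    simp only [slot₁₂, Finset.sum_mul]
    rw [Finset.sum_comm]
    exact Finset.sum_congr rfl fun j _ => Finset.sum_congr rfl fun i _ => by ring
  have P13 : ∀ g : ι → ℝ, ∑ j, ∑ k, slot₁ z a j k * (z k * g j)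
      = -(1 / 2) * ∑ k, slot₁₂ z a k * g k := by
    intro g
    rw [Finset.mul_sum]
    refine Finset.sum_congr rfl fun j _ => ?_
    have h := (slot₁_slot₃_swap z a j).trans (slot₁_slot₃ z a has hac j)
    calc _ = (∑ k, z k * slot₁ z a j k) * g j := by
          rw [Finset.sum_mul]
          exact Finset.sum_congr rfl fun k _ => by ring
      _ = _ := by rw [h]; ring
  have h1 := P1 (slot₁ z b)
  have h2 := P2 (slot₁ z b)
  have h3 := P3 (slot₃ z b)
  have h12 := (P1 fun j k => z j * slot₁₂ z b k).trans (P12 _)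
  have h13 := (P1 fun j k => z k * slot₁₂ z b j).trans (P13 _)
  have h23 := (P2 fun j k => z k * slot₁₂ z b j).trans (P13 _)
  calc _ = (∑ i, ∑ j, ∑ k, a i j k * b i j k)
        - 2 * c * ((∑ i, ∑ j, ∑ k, a i j k * (z i * slot₁ z b j k))
          + (∑ i, ∑ j, ∑ k, a i j k * (z j * slot₁ z b i k))
          + (∑ i, ∑ j, ∑ k, a i j k * (z k * slot₃ z b i j)))
        + 4 * c ^ 2 * ((∑ i, ∑ j, ∑ k, a i j k * (z i * (z j * slot₁₂ z b k)))
          - 1 / 2 * (∑ i, ∑ j, ∑ k, a i j k * (z i * (z k * slot₁₂ z b j)))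
          - 1 / 2 * (∑ i, ∑ j, ∑ k, a i j k * (z j * (z k * slot₁₂ z b i)))) := by
        simp only [Finset.mul_sum, ← Finset.sum_add_distrib, ← Finset.sum_sub_distrib, reflect]
        exact Finset.sum_congr rfl fun j _ => Finset.sum_congr rfl fun i _ =>
          Finset.sum_congr rfl fun k _ => by ring
    _ = _ := by rw [h1, h2, h3, h12, h13, h23]; ring

/-- Contracting a traceless hook tensor with deltas on any two of its slots gives zero. -/
lemma sum_pair_delta_eq_zero [DecidableEq ι] (b : ι → ι → ι → ℝ)
    (hbs : ∀ i j k, b i j k = b j i k)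
    (hbc : ∀ i j k, b i j k + b i k j + b k j i = 0)
    (hbt : ∀ k, ∑ i, b i i k = 0) (X Y : ι → ℝ) :
    ∑ m, ∑ n, ∑ l, ((if m = n then (1 : ℝ) else 0) * X l + (if m = l then (1 : ℝ) else 0) * Y n
      + (if n = l then (1 : ℝ) else 0) * Y m) * b m n l = 0 := by
  have hbt' : ∀ n, ∑ m, b m n m = 0 := by
    intro n
    have h : ∑ m, (b m m n + 2 * b m n m) = 0 := Finset.sum_eq_zero fun m _ => by
      have := hbc m m n
      rw [hbs n m m] at this
      linarith
    rw [Finset.sum_add_distrib, hbt, ← Finset.mul_sum] at h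
    linarith
  have hbt'' : ∀ m, ∑ n, b m n n = 0 := fun m => by
    rw [← hbt' m]
    exact Finset.sum_congr rfl fun n _ => hbs _ _ _
  have e1 : ∑ m, ∑ n, ∑ l, (if m = n then (1 : ℝ) else 0) * X l * b m n l = 0 := by
    calc _ = ∑ m, ∑ l, X l * b m m l := by
          refine Finset.sum_congr rfl fun m _ => ?_
          rw [Finset.sum_comm]
          simp
      _ = ∑ l, X l * ∑ m, b m m l := by
          rw [Finset.sum_comm]
          simp only [Finset.mul_sum]
      _ = 0 := by simp [hbt]
  have e2 : ∑ m, ∑ n, ∑ l, (if m = l then (1 : ℝ) else 0) * Y n * b m n l = 0 := by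
    calc _ = ∑ m, ∑ n, Y n * b m n m := by simp
      _ = ∑ n, Y n * ∑ m, b m n m := by
          rw [Finset.sum_comm]
          simp only [Finset.mul_sum]
      _ = 0 := by simp [hbt']
  have e3 : ∑ m, ∑ n, ∑ l, (if n = l then (1 : ℝ) else 0) * Y m * b m n l = 0 := by
    calc _ = ∑ m, Y m * ∑ n, b m n n := by simp [Finset.mul_sum]
      _ = 0 := by simp [hbt'']
  simp only [add_mul, Finset.sum_add_distrib, e1, e2, e3, add_zero]

lemma sum_weight_pairing {α κ : Type*} [Fintype α] [Fintype κ] (w : α → ℝ) (A B : α → κ → ℝ) :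
    ∑ x, ∑ y, (∑ p, A x p * B y p) * w x * w y
      = ∑ p, (∑ x, w x * A x p) * (∑ y, w y * B y p) := by
  simp only [Finset.sum_mul_sum]
  simp only [Finset.sum_mul]
  rw [Finset.sum_comm (s := (Finset.univ : Finset κ))]
  refine Finset.sum_congr rfl fun x _ => ?_
  rw [Finset.sum_comm (s := (Finset.univ : Finset κ))]
  exact Finset.sum_congr rfl fun y _ => Finset.sum_congr rfl fun p _ => by ring

end HookAux

theorem stmt_16 (d : ℕ) (hd : 2 ≤ d) (z : Fin d → ℝ) (hz : z ≠ 0)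
    (zsq : ℝ) (hzsq : zsq = ∑ m, z m ^ 2)
    (I : Fin d → Fin d → ℝ)
    (hI : ∀ m n, I m n = (if m = n then (1 : ℝ) else 0) - 2 * z m * z n / zsq)
    (T : Fin d → Fin d → Fin d → Fin d → Fin d → Fin d → ℝ)
    (hT : ∀ i j k m n l, T i j k m n l =
      (if i = j then (1 : ℝ) else 0) * (if m = n then (1 : ℝ) else 0) * I k l
      - (1 / 2) * (if m = n then (1 : ℝ) else 0)
          * ((if i = k then (1 : ℝ) else 0) * I j l
             + (if j = k then (1 : ℝ) else 0) * I i l)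
      - (1 / 2) * (if i = j then (1 : ℝ) else 0)
          * (if m = l then (1 : ℝ) else 0) * I k n
      + (1 / 4) * (if m = l then (1 : ℝ) else 0)
          * ((if i = k then (1 : ℝ) else 0) * I j n
             + (if j = k then (1 : ℝ) else 0) * I i n)
      - (1 / 2) * (if i = j then (1 : ℝ) else 0)
          * (if n = l then (1 : ℝ) else 0) * I k m
      + (1 / 4) * (if n = l then (1 : ℝ) else 0)
          * ((if i = k then (1 : ℝ) else 0) * I j m
             + (if j = k then (1 : ℝ) else 0) * I i m))
    (Pr : Fin d → Fin d → Fin d → Fin d → Fin d → Fin d → ℝ)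
    (hPr : ∀ i j k m n l, Pr i j k m n l =
      (I i m * I j n + I i n * I j m) * I k l
      - (1 / 2) * (I i m * I k n + I i n * I k m) * I j l
      - (1 / 2) * (I j m * I k n + I j n * I k m) * I i l
      - (2 / ((d : ℝ) - 1)) * T i j k m n l)
    (a b : Fin d → Fin d → Fin d → ℝ)
    (has : ∀ i j k, a i j k = a j i k)
    (hac : ∀ i j k, a i j k + a i k j + a k j i = 0)
    (hat : ∀ k, ∑ i, a i i k = 0)
    (hbs : ∀ i j k, b i j k = b j i k)
    (hbc : ∀ i j k, b i j k + b i k j + b k j i = 0)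
    (hbt : ∀ k, ∑ i, b i i k = 0) :
    (∑ i, ∑ j, ∑ k, ∑ m, ∑ n, ∑ l, a i j k * Pr i j k m n l * b m n l)
    = 3 * ((∑ i, ∑ j, ∑ k, a i j k * b i j k)
      - 4 * (∑ m, ∑ n, (∑ i, ∑ j, a m i j * b n i j) * z m * z n) / zsq
      - 2 * (∑ k, ∑ m, (∑ i, ∑ j, a i j k * b i j m) * z k * z m) / zsq
      + 6 * (∑ i, ∑ j, ∑ m, ∑ n, (∑ k, a i j k * b m n k)
          * z i * z j * z m * z n) / zsq ^ 2) := by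
  obtain ⟨c, hc⟩ : ∃ c : ℝ, c = zsq⁻¹ := ⟨_, rfl⟩
  have hI' : ∀ m n, I m n = (if m = n then (1 : ℝ) else 0) - 2 * c * z m * z n := by
    intro m n
    rw [hI, hc]
    ring
  have hT0 : ∀ i j k, ∑ m, ∑ n, ∑ l, T i j k m n l * b m n l = 0 := by
    intro i j k
    rw [← sum_pair_delta_eq_zero b hbs hbc hbt
      (fun l => (if i = j then (1 : ℝ) else 0) * I k l
        - (1 / 2) * ((if i = k then (1 : ℝ) else 0) * I j l
          + (if j = k then (1 : ℝ) else 0) * I i l))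
      (fun n => - (1 / 2) * (if i = j then (1 : ℝ) else 0) * I k n
        + (1 / 4) * ((if i = k then (1 : ℝ) else 0) * I j n
          + (if j = k then (1 : ℝ) else 0) * I i n))]
    refine Finset.sum_congr rfl fun m _ => Finset.sum_congr rfl fun n _ =>
      Finset.sum_congr rfl fun l _ => ?_
    rw [hT]
    ring
  have hC := reflect_eq c z I hI' b hbs hbc
  have hC' : ∀ i j k, ∑ m, ∑ n, ∑ l, I i n * I j m * I k l * b m n l = reflect c z b i j k := by
    intro i j k
    rw [reflect_symm c z b hbs, ← hC]
    refine Finset.sum_congr rfl fun m _ => Finset.sum_congr rfl fun n _ =>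
      Finset.sum_congr rfl fun l _ => ?_
    ring
  have hPb : ∀ i j k, ∑ m, ∑ n, ∑ l, Pr i j k m n l * b m n l = 3 * reflect c z b i j k := by
    intro i j k
    calc _ = (∑ m, ∑ n, ∑ l, I i m * I j n * I k l * b m n l)
          + (∑ m, ∑ n, ∑ l, I i n * I j m * I k l * b m n l)
          - (1 / 2) * ((∑ m, ∑ n, ∑ l, I i m * I k n * I j l * b m n l)
            + (∑ m, ∑ n, ∑ l, I i n * I k m * I j l * b m n l))
          - (1 / 2) * ((∑ m, ∑ n, ∑ l, I j m * I k n * I i l * b m n l)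
            + (∑ m, ∑ n, ∑ l, I j n * I k m * I i l * b m n l))
          - (2 / ((d : ℝ) - 1)) * ∑ m, ∑ n, ∑ l, T i j k m n l * b m n l := by
          simp only [Finset.mul_sum, ← Finset.sum_add_distrib, ← Finset.sum_sub_distrib]
          refine Finset.sum_congr rfl fun m _ => Finset.sum_congr rfl fun n _ =>
            Finset.sum_congr rfl fun l _ => ?_
          rw [hPr]
          ring
      _ = _ := by
          rw [hC, hC', hC, hC', hC, hC', hT0]
          have h := reflect_cyclic c z b hbs hbc i j k
          rw [reflect_symm c z b hbs k j i] at h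
          linear_combination -h
  have hL : (∑ i, ∑ j, ∑ k, ∑ m, ∑ n, ∑ l, a i j k * Pr i j k m n l * b m n l)
      = 3 * ∑ i, ∑ j, ∑ k, a i j k * reflect c z b i j k := by
    simp only [mul_assoc, ← Finset.mul_sum, hPb]
    simp only [Finset.mul_sum]
    refine Finset.sum_congr rfl fun m _ => Finset.sum_congr rfl fun n _ =>
      Finset.sum_congr rfl fun l _ => ?_
    ring
  have s1 : ∑ m, ∑ n, (∑ i, ∑ j, a m i j * b n i j) * z m * z n
      = ∑ i, ∑ j, slot₁ z a i j * slot₁ z b i j := by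
    have h := sum_weight_pairing z (fun m (p : Fin d × Fin d) => a m p.1 p.2)
      (fun n p => b n p.1 p.2)
    simp only [Fintype.sum_prod_type] at h
    exact h
  have s3 : ∑ k, ∑ m, (∑ i, ∑ j, a i j k * b i j m) * z k * z m
      = ∑ i, ∑ j, slot₃ z a i j * slot₃ z b i j := by
    have h := sum_weight_pairing z (fun k (p : Fin d × Fin d) => a p.1 p.2 k)
      (fun m p => b p.1 p.2 m)
    simp only [Fintype.sum_prod_type] at h
    exact h
  have s12 : ∑ i, ∑ j, ∑ m, ∑ n, (∑ k, a i j k * b m n k) * z i * z j * z m * z n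
      = ∑ k, slot₁₂ z a k * slot₁₂ z b k := by
    have h := sum_weight_pairing (fun p : Fin d × Fin d => z p.1 * z p.2)
      (fun p k => a p.1 p.2 k) (fun p k => b p.1 p.2 k)
    have e : ∀ (f : Fin d → Fin d → Fin d → ℝ) (_ : ∀ i j k, f i j k = f j i k) (k : Fin d),
        ∑ i, ∑ j, z i * z j * f i j k = slot₁₂ z f k := by
      intro f hf k
      simp only [slot₁₂, slot₁, Finset.mul_sum]
      exact Finset.sum_congr rfl fun i _ => Finset.sum_congr rfl fun j _ => by
        rw [hf i j k]; ring
    simp only [Fintype.sum_prod_type, e a has, e b hbs] at h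
    rw [← h]
    exact Finset.sum_congr rfl fun i _ => Finset.sum_congr rfl fun j _ =>
      Finset.sum_congr rfl fun m _ => Finset.sum_congr rfl fun n _ => by ring
  rw [hL, pairing_reflect c z a b has hac, s1, s3, s12, hc]
  ring
end

section
/- Let d ≥ 3 be an integer and k ∈ ℝ^d with k ≠ 0; write k² = Σ_m k_m² (repeated Latin indices summed from 1 to d). Let φ_{ij,l} ∈ ℂ (i,j,l ∈ {1,…,d}) satisfy φ_{ij,l} = φ_{ji,l} and φ_{ij,l} + φ_{il,j} + φ_{lj,i} = 0, and set φ_l := Σ_i φ_{ii,l}. Define φ̄_{ij,l} := φ_{ij,l} − (1/k²)(k_i k_m φ_{mj,l} + k_j k_m φ_{im,l} + k_l k_m φ_{ij,m}) + (1/k⁴)(k_i k_j k_m k_n φ_{mn,l} − (1/2)k_i k_l k_m k_n φ_{mn,j} − (1/2)k_j k_l k_m k_n φ_{mn,i}) − (1/(d−2))(δ_{ij} − k_i k_j/k²)(φ_l − k_m k_n φ_{mn,l}/k² − k_l k_m φ_m/k²) + (1/(2(d−2)))(δ_{il} − k_i k_l/k²)(φ_j − k_m k_n φ_{mn,j}/k²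 − k_j k_m φ_m/k²) + (1/(2(d−2)))(δ_{jl} − k_j k_l/k²)(φ_i − k_m k_n φ_{mn,i}/k² − k_i k_m φ_m/k²). Then φ̄ is traceless and transverse: Σ_i φ̄_{ii,l} = 0 for all l, Σ_i k_i φ̄_{ij,l} = 0 for all j,l, and Σ_l k_l φ̄_{ij,l} = 0 for all i,j; moreover φ̄_{ij,l} = φ̄_{ji,l}. -/
/-!
Write `K = k²`, `D j l = k_m φ_{mj,l}`, `E i j = k_m φ_{ij,m}`, `S l = k_m k_n φ_{mn,l}`,
`P = k_m φ_m` and `A l = φ_l - S_l / K - k_l P / K`. The cyclic identity gives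
`D j l + D l j + E l j = 0`, and contracting it with `k` once and twice yields
`k_i E i j = -S_j / 2` and `k · S = 0`, whence also `k · A = 0`. In terms of these objects `φ̄` is
a short polynomial expression (`hB` below), whose trace and whose divergence in the first index
follow by summing term by term. That expression inherits both the symmetry in the first two
indices and the cyclic identity, so transversality in the last index is a consequence of
transversality in the first.
-/

theorem stmt_18 (d : ℕ) (hd : 3 ≤ d) (k : Fin d → ℝ) (hk : k ≠ 0)
    (ksq : ℝ) (hksq : ksq = ∑ m, (k m) ^ 2)
    (φ : Fin d → Fin d → Fin d → ℂ)
    (hsym : ∀ i j l, φ i j l = φ j i l)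
    (hcyc : ∀ i j l, φ i j l + φ i l j + φ l j i = 0)
    (φv : Fin d → ℂ) (hφv : ∀ l, φv l = ∑ i, φ i i l)
    (φbar : Fin d → Fin d → Fin d → ℂ)
    (hφbar : ∀ i j l, φbar i j l =
      φ i j l
      - (1 / (ksq : ℂ)) * ((k i : ℂ) * (∑ m, (k m : ℂ) * φ m j l)
          + (k j : ℂ) * (∑ m, (k m : ℂ) * φ i m l)
          + (k l : ℂ) * (∑ m, (k m : ℂ) * φ i j m))
      + (1 / (ksq : ℂ) ^ 2)
        * ((k i : ℂ) * (k j : ℂ) * (∑ m, ∑ n, (k m : ℂ) * (k n : ℂ) * φ m n l)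
          - (1 / 2) * (k i : ℂ) * (k l : ℂ)
              * (∑ m, ∑ n, (k m : ℂ) * (k n : ℂ) * φ m n j)
          - (1 / 2) * (k j : ℂ) * (k l : ℂ)
              * (∑ m, ∑ n, (k m : ℂ) * (k n : ℂ) * φ m n i))
      - (1 / ((d : ℂ) - 2))
        * ((if i = j then (1 : ℂ) else 0) - (k i : ℂ) * (k j : ℂ) / (ksq : ℂ))
        * (φv l - (∑ m, ∑ n, (k m : ℂ) * (k n : ℂ) * φ m n l) / (ksq : ℂ)
            - (k l : ℂ) * (∑ m, (k m : ℂ) * φv m) / (ksq : ℂ))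
      + (1 / (2 * ((d : ℂ) - 2)))
        * ((if i = l then (1 : ℂ) else 0) - (k i : ℂ) * (k l : ℂ) / (ksq : ℂ))
        * (φv j - (∑ m, ∑ n, (k m : ℂ) * (k n : ℂ) * φ m n j) / (ksq : ℂ)
            - (k j : ℂ) * (∑ m, (k m : ℂ) * φv m) / (ksq : ℂ))
      + (1 / (2 * ((d : ℂ) - 2)))
        * ((if j = l then (1 : ℂ) else 0) - (k j : ℂ) * (k l : ℂ) / (ksq : ℂ))
        * (φv i - (∑ m, ∑ n, (k m : ℂ) * (k n : ℂ) * φ m n i) / (ksq : ℂ)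
            - (k i : ℂ) * (∑ m, (k m : ℂ) * φv m) / (ksq : ℂ))) :
    (∀ l, ∑ i, φbar i i l = 0) ∧
    (∀ j l, ∑ i, (k i : ℂ) * φbar i j l = 0) ∧
    (∀ i j, ∑ l, (k l : ℂ) * φbar i j l = 0) ∧
    (∀ i j l, φbar i j l = φbar j i l) := by
  obtain ⟨κ, hκ⟩ : ∃ κ : Fin d → ℂ, ∀ m, (k m : ℂ) = κ m := ⟨_, fun _ => rfl⟩
  have hK0 : (ksq : ℂ) ≠ 0 := by
    obtain ⟨m, hm⟩ := Function.ne_iff.mp hk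
    have : 0 < ksq := by
      rw [hksq]
      exact Finset.sum_pos' (fun i _ => sq_nonneg _) ⟨m, Finset.mem_univ _, sq_pos_of_ne_zero hm⟩
    exact_mod_cast this.ne'
  have hd0 : (d : ℂ) - 2 ≠ 0 := by
    rw [sub_ne_zero]
    exact_mod_cast (by omega : d ≠ 2)
  have hKK : ∑ i, κ i * κ i = (ksq : ℂ) := by
    rw [hksq]
    push_cast
    exact Finset.sum_congr rfl fun i _ => by rw [hκ, sq]
  simp only [hκ] at hφbar ⊢
  generalize (ksq : ℂ) = K at *
  obtain ⟨D, hD⟩ : ∃ D : Fin d → Fin d → ℂ, ∀ j l, D j l = ∑ m, κ m * φ m j l :=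
    ⟨_, fun _ _ => rfl⟩
  obtain ⟨E, hE⟩ : ∃ E : Fin d → Fin d → ℂ, ∀ i j, E i j = ∑ m, κ m * φ i j m :=
    ⟨_, fun _ _ => rfl⟩
  obtain ⟨S, hS⟩ : ∃ S : Fin d → ℂ, ∀ l, S l = ∑ m, ∑ n, κ m * κ n * φ m n l :=
    ⟨_, fun _ => rfl⟩
  obtain ⟨P, hP⟩ : ∃ P : ℂ, P = ∑ m, κ m * φv m := ⟨_, rfl⟩
  obtain ⟨A, hA⟩ : ∃ A : Fin d → ℂ, ∀ l, A l = φv l - S l / K - κ l * P / K :=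
    ⟨_, fun _ => rfl⟩
  have hEsym : ∀ i j, E i j = E j i := fun i j => by simp only [hE, hsym i j]
  have hDE : ∀ j l, D j l + D l j + E l j = 0 := fun j l => by
    simp only [hD, hE, ← Finset.sum_add_distrib, ← mul_add]
    exact Finset.sum_eq_zero fun m _ => by rw [hcyc m j l, mul_zero]
  have hkD : ∀ l, ∑ i, κ i * D i l = S l := fun l => by
    simp only [hD, hS, Finset.mul_sum]
    refine Finset.sum_congr rfl fun i _ => Finset.sum_congr rfl fun m _ => ?_
    rw [hsym m i l]; ring
  have hkE : ∀ j, ∑ i, κ i * E i j = -(1 / 2) * S j := fun j => by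
    -- `k_i k_m φ_{ij,m}` is both `k · E` and the contraction of `D` in its second index.
    have h1 : ∑ i, κ i * D j i = ∑ i, κ i * E i j := by
      simp only [hD, hE, Finset.mul_sum]
      rw [Finset.sum_comm]
      exact Finset.sum_congr rfl fun i _ => Finset.sum_congr rfl fun m _ => by ring
    have h2 : ∑ i, κ i * (D j i + D i j + E i j) = 0 := by simp [hDE]
    simp only [mul_add, Finset.sum_add_distrib, h1, hkD] at h2
    linear_combination (1 / 2) * h2
  have hkS : ∑ i, κ i * S i = 0 := by
    -- `k_j k_i E i j` equals both `-(k · S) / 2` and `k_l k_m k_n φ_{mn,l} = k · S`.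
    have h1 : ∑ j, κ j * ∑ i, κ i * E i j = ∑ l, κ l * S l := by
      simp only [hE, hS, Finset.mul_sum]
      rw [Finset.sum_congr rfl fun j _ => Finset.sum_comm, Finset.sum_comm]
      exact Finset.sum_congr rfl fun i _ => Finset.sum_congr rfl fun m _ =>
        Finset.sum_congr rfl fun n _ => by rw [hsym n m]; ring
    have h2 : ∑ j, κ j * (-(1 / 2) * S j) = -(1 / 2) * ∑ l, κ l * S l := by
      rw [Finset.mul_sum]
      exact Finset.sum_congr rfl fun i _ => by ring
    simp only [hkE] at h1
    linear_combination (2 / 3) * (h2 - h1)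
  have htrE : ∑ i, E i i = P := by
    simp only [hE, hP, hφv, Finset.mul_sum]
    exact Finset.sum_comm
  have hkA : ∑ i, κ i * A i = 0 := by
    have h : ∀ i, κ i * A i = κ i * φv i - κ i * S i * K⁻¹ - κ i * κ i * (P * K⁻¹) :=
      fun i => by rw [hA]; ring
    simp only [h, Finset.sum_sub_distrib, ← Finset.sum_mul, hkS, hKK, ← hP]
    field_simp
    ring
  obtain ⟨δ, hδ⟩ : ∃ δ : Fin d → Fin d → ℂ, ∀ i j, δ i j = if i = j then 1 else 0 :=
    ⟨_, fun _ _ => rfl⟩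
  have hδsym : ∀ i j, δ i j = δ j i := fun i j => by simp only [hδ, eq_comm]
  have hδsum : ∀ (f : Fin d → ℂ) (l : Fin d), ∑ i, f i * δ i l = f l := fun f l => by
    simp [hδ]
  -- Opaque names for `1 / (d - 2)` and `1 / K` turn the remaining goals into polynomial identities
  -- modulo `ha` and `hc`.
  obtain ⟨a, ha⟩ : ∃ a : ℂ, a * ((d : ℂ) - 2) = 1 := ⟨_, inv_mul_cancel₀ hd0⟩
  obtain ⟨c, hc⟩ : ∃ c : ℂ, c * K = 1 := ⟨_, inv_mul_cancel₀ hK0⟩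
  have ha' : 1 / ((d : ℂ) - 2) = a := by rw [div_eq_iff hd0, ha]
  have ha2 : 1 / (2 * ((d : ℂ) - 2)) = a / 2 := by rw [← ha']; field_simp
  have hc' : K⁻¹ = c := by rw [inv_eq_iff_eq_inv, eq_inv_of_mul_eq_one_right hc]
  have hB : ∀ i j l, φbar i j l = φ i j l
      - c * (κ i * D j l + κ j * D i l + κ l * E i j)
      + c ^ 2 * (κ i * κ j * S l - (1 / 2) * κ i * κ l * S j - (1 / 2) * κ j * κ l * S i)
      - a * (δ i j - c * κ i * κ j) * A l
      + a / 2 * (δ i l - c * κ i * κ l) * A j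
      + a / 2 * (δ j l - c * κ j * κ l) * A i := fun i j l => by
    have hD2 : ∑ m, κ m * φ i m l = D i l := by simp only [hD, hsym i]
    rw [hφbar]
    simp only [← hδ, ← hP, ← hS, ← hE, ← hD, hD2, ← hA, ha', ha2]
    rw [← hc']
    ring
  have hBsym : ∀ i j l, φbar i j l = φbar j i l := fun i j l => by
    rw [hB, hB, hsym i j l, hEsym i j, hδsym i j]
    ring
  have hBcyc : ∀ i j l, φbar i j l + φbar i l j + φbar l j i = 0 := fun i j l => by
    rw [hB, hB, hB, hδsym l j, hδsym l i, hδsym j i]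
    linear_combination hcyc i j l - c * (κ i * hDE j l + κ j * hDE l i + κ l * hDE j i)
  have hdiv : ∀ j l, ∑ i, κ i * φbar i j l = 0 := fun j l => by
    have h : ∀ i, κ i * φbar i j l = κ i * φ i j l
        - κ i * κ i * (c * D j l) - κ i * D i l * (c * κ j) - κ i * E i j * (c * κ l)
        + κ i * κ i * (c ^ 2 * (κ j * S l - (1 / 2) * κ l * S j))
        - κ i * S i * (c ^ 2 * (1 / 2) * κ j * κ l)
        - κ i * δ i j * (a * A l) + κ i * κ i * (a * c * κ j * A l)
        + κ i * δ i l * (a / 2 * A j) - κ i * κ i * (a / 2 * c * κ l * A j)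
        + κ i * A i * (a / 2 * (δ j l - c * κ j * κ l)) := fun i => by rw [hB]; ring
    simp only [h, Finset.sum_sub_distrib, Finset.sum_add_distrib, ← Finset.sum_mul, hkS, hKK,
      hkD, hkE, hδsum, hkA, ← hD]
    linear_combination (-D j l + c * (κ j * S l - (1 / 2) * κ l * S j) + a * κ j * A l
      - a / 2 * κ l * A j) * hc
  refine ⟨fun l => ?_, hdiv, fun i j => ?_, hBsym⟩
  · have h : ∀ i, φbar i i l = φ i i l
        - κ i * D i l * (2 * c) - E i i * (c * κ l)
        + κ i * κ i * (c ^ 2 * S l) - κ i * S i * (c ^ 2 * κ l)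
        - 1 * (a * A l) + κ i * κ i * (a * c * A l)
        + A i * δ i l * a - κ i * A i * (a * c * κ l) := fun i => by
      rw [hB, show δ i i = 1 by simp [hδ]]; ring
    simp only [h, Finset.sum_sub_distrib, Finset.sum_add_distrib, ← Finset.sum_mul, hkS, hKK,
      hkD, htrE, hδsum, hkA, ← hφv, Finset.sum_const, Finset.card_univ, Fintype.card_fin,
      nsmul_eq_mul, mul_one]
    have hAl : A l = φv l - S l * c - κ l * P * c := by rw [hA, ← hc']; ring
    linear_combination (c * S l + a * A l) * hc - A l * ha - hAl
  · have h : ∀ l, κ l * φbar i j l = -(κ l * φbar l i j) - κ l * φbar l j i := fun l => by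
      rw [hBsym l i j]
      linear_combination κ l * hBcyc i j l
    rw [Finset.sum_congr rfl fun l _ => h l, Finset.sum_sub_distrib, Finset.sum_neg_distrib,
      hdiv, hdiv]
    ring
end
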